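/- arXiv:1809.08584 — 3 statements merged into one kernel-verified Lean document; each statement's English description precedes it below -/
import Mathlib

section
/- Let m ≥ 2, r ≥ 1 and q ≥ 2 be integers, and let f_1 and f_2 be two elements of T_{r,m} of order q with rotation number 1/q; write f_i(0) = N_i/m^{s_i} with N_i, s_i integers, for i = 1, 2. The following are equivalent: (1) f_1 and f_2 are conjugate in T_{r,m}; (2) N_2 − N_1 is a multiple of m−1; (3) f_1(0) − f_2(0) ∈ (m−1)·ℤ[1/m]. -/
/-!
Conjugacy of elements of order `q` and rotation number `1/q` in the group `T_{r,m}`.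

Such an element `f` has a unique lift `F` with `F^[q] x = x + r` (`PLm.exists_nlift`), and then
`F 0` is the representative of `f 0` in `(0, r)`; the interval `[0, F 0]` is a fundamental domain
for the action of `F` on the line. Congruences below are modulo the group `J = (m - 1)·ℤ[1/m]`.

If `H` is a lift of a conjugacy, comparing `q`-th iterates gives `H ∘ F₁ = F₂ ∘ H` exactly. Since
`m^s ≡ 1`, a `PL_m` map preserves the class of the difference of two points of `ℤ[1/m]`
(`PLm.PL.sub_mem_J`). Hence `H (F₁ 0) ≡ H 0 + F₁ 0` and `F₂ (H 0) ≡ F₂ 0 + H 0`, so `F₁ 0 ≡ F₂ 0`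
(`PLm.sub_mem_of_conj`).

Conversely, if `F₁ 0 ≡ F₂ 0`, there is a `PL_m` homeomorphism `[0, F₁ 0] → [0, F₂ 0]`
(`PLm.iso_of_sub_mem`): cut both intervals into pieces of length `m^t`; replacing a piece of length
`m^t` by one of length `m^(t+1)` changes the number of pieces by `m - 1`. It extends equivariantly
to the line (`PLm.exists_extension`) and is `PL_m` on each translate of the fundamental domain, of
which `q` make up `[0, r]` (`PLm.exists_conj`).

The arithmetic equivalence holds because `N / m^s ≡ N`, and because an integer lies in `J` only if
`m - 1` divides it, `m` and `m - 1` being coprime (`PLm.intCast_mem_J`).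

Composition, inversion and gluing are done with the inductive predicate `PLm.PL` on intervals; it is
compared with the subdivisions of `IsPLmLift` in `PLm.PL.of_subdivision` and `PLm.PL.isPLmLift`.
-/

open Filter Topology

/-- The set `ℤ[1/m] = {N·m^s : N, s ∈ ℤ}` as a subset of `ℝ`. -/
def ZInvM (m : ℕ) : Set ℝ := {x : ℝ | ∃ N s : ℤ, x = (N : ℝ) * (m : ℝ) ^ s}

/-- `F : ℝ → ℝ` is a lift of an orientation-preserving `PL_m` homeomorphism from the
circle `ℝ/rℤ` to the circle `ℝ/r'ℤ`: it is strictly increasing, commutes appropriately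
with the translations, and is affine on the pieces of a finite subdivision
`0 = a₀ < a₁ < ... < aₙ = r` of `[0, r]`, with slopes powers of `m`, breakpoints in
`ℤ[1/m]` and images of breakpoints in `ℤ[1/m]`. -/
def IsPLmLift (m : ℕ) (r r' : ℝ) (F : ℝ → ℝ) : Prop :=
  StrictMono F ∧ (∀ x : ℝ, F (x + r) = F x + r') ∧
    ∃ (n : ℕ) (a : Fin (n + 1) → ℝ),
      StrictMono a ∧ a 0 = 0 ∧ a (Fin.last n) = r ∧
      (∀ i, a i ∈ ZInvM m) ∧ (∀ i, F (a i) ∈ ZInvM m) ∧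
      ∀ i : Fin n, ∃ (s : ℤ) (β : ℝ),
        ∀ x ∈ Set.Icc (a i.castSucc) (a i.succ), F x = (m : ℝ) ^ s * x + β

/-- Membership in the Brown–Thompson group `T_{r,m}`, viewed inside the permutations of
the circle `ℝ/rℤ`: `f` is induced by a `PL_m` lift. -/
def InT (r m : ℕ) (f : Equiv.Perm (AddCircle (r : ℝ))) : Prop :=
  ∃ F : ℝ → ℝ, IsPLmLift m r r F ∧ ∀ x : ℝ, f ↑x = ↑(F x)

/-- `f` and `g` are conjugate by an element of `T_{r,m}`. -/
def ConjInT (r m : ℕ) (f g : Equiv.Perm (AddCircle (r : ℝ))) : Prop :=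
  ∃ h : Equiv.Perm (AddCircle (r : ℝ)), InT r m h ∧ h * f * h⁻¹ = g

/-- The circle homeomorphism `f` of `ℝ/rℤ` has rotation number `ρ ∈ ℝ/ℤ`: some monotone
lift `F` of `f` commuting with translation by `r` satisfies `F^[n] 0 / (r·n) → L`
with `L ≡ ρ (mod 1)`. -/
def HasRotNum (r : ℝ) (f : Equiv.Perm (AddCircle r)) (ρ : AddCircle (1 : ℝ)) : Prop :=
  ∃ F : ℝ → ℝ, Monotone F ∧ (∀ x : ℝ, F (x + r) = F x + r) ∧ (∀ x : ℝ, f ↑x = ↑(F x)) ∧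
    ∃ L : ℝ, Tendsto (fun n : ℕ => F^[n] 0 / (r * n)) atTop (𝓝 L) ∧
      ((L : AddCircle (1 : ℝ)) = ρ)


open Set

namespace PLm

/-! ### The ring `ℤ[1/m]` and congruences modulo `m - 1` -/

variable {m : ℕ} [NeZero m]

lemma mpos (m : ℕ) [NeZero m] : (0 : ℝ) < m := Nat.cast_pos.2 (Nat.pos_of_ne_zero (NeZero.ne m))

lemma zpos (m : ℕ) [NeZero m] (s : ℤ) : (0 : ℝ) < (m : ℝ) ^ s := zpow_pos (mpos m) s

/-- Rewriting `N * m^s` with a smaller exponent. -/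
lemma rescale (N : ℤ) {s t : ℤ} (h : t ≤ s) :
    (N : ℝ) * (m : ℝ) ^ s = ((N * (m : ℤ) ^ (s - t).toNat : ℤ) : ℝ) * (m : ℝ) ^ t := by
  have h1 : s = ((s - t).toNat : ℤ) + t := by omega
  conv_lhs => rw [h1, zpow_add₀ (mpos m).ne', zpow_natCast]
  push_cast
  ring

/-- `ℤ[1/m]` as a subring of `ℝ`. -/
def zRing (m : ℕ) [NeZero m] : Subring ℝ where
  carrier := ZInvM m
  zero_mem' := ⟨0, 0, by simp⟩
  one_mem' := ⟨1, 0, by simp⟩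
  neg_mem' := by
    rintro _ ⟨N, s, rfl⟩
    exact ⟨-N, s, by push_cast; ring⟩
  mul_mem' := by
    rintro _ _ ⟨N, s, rfl⟩ ⟨M, t, rfl⟩
    exact ⟨N * M, s + t, by rw [zpow_add₀ (mpos m).ne']; push_cast; ring⟩
  add_mem' := by
    rintro _ _ ⟨N, s, rfl⟩ ⟨M, t, rfl⟩
    refine ⟨N * (m : ℤ) ^ (s - min s t).toNat + M * (m : ℤ) ^ (t - min s t).toNat, min s t, ?_⟩
    rw [rescale N (min_le_left s t), rescale M (min_le_right s t)]
    push_cast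
    ring

lemma zpow_mem (s : ℤ) : (m : ℝ) ^ s ∈ zRing m := ⟨1, s, by simp⟩

/-- The additive group `(m - 1)·ℤ[1/m]`. -/
def J (m : ℕ) [NeZero m] : AddSubgroup ℝ where
  carrier := {x | ∃ z ∈ zRing m, x = ((m : ℝ) - 1) * z}
  zero_mem' := ⟨0, zero_mem _, by simp⟩
  neg_mem' := by
    rintro _ ⟨z, hz, rfl⟩
    exact ⟨-z, neg_mem hz, by ring⟩
  add_mem' := by
    rintro _ _ ⟨z, hz, rfl⟩ ⟨w, hw, rfl⟩
    exact ⟨z + w, add_mem hz hw, by ring⟩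

lemma J_mul {x y : ℝ} (hx : x ∈ J m) (hy : y ∈ zRing m) : x * y ∈ J m := by
  obtain ⟨z, hz, rfl⟩ := hx
  exact ⟨z * y, mul_mem hz hy, by ring⟩

/-- Powers of `m` are congruent to `1` modulo `(m - 1)·ℤ[1/m]`. -/
lemma zpow_sub_one_mem (s : ℤ) : (m : ℝ) ^ s - 1 ∈ J m := by
  have key : ∀ n : ℕ, (m : ℝ) ^ n - 1 ∈ J m := by
    intro n
    refine ⟨∑ i ∈ Finset.range n, (m : ℝ) ^ i, ?_, ?_⟩
    · exact sum_mem fun i _ => pow_mem (natCast_mem _ m) i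
    · rw [mul_comm, geom_sum_mul]
  obtain ⟨n, rfl | rfl⟩ := s.eq_nat_or_neg
  · simpa using key n
  · have h := J_mul (neg_mem (key n)) (zpow_mem (m := m) (-n))
    convert h using 1
    have : (m : ℝ) ^ n ≠ 0 := pow_ne_zero _ (mpos m).ne'
    rw [zpow_neg, zpow_natCast]
    field_simp
    ring

/-- An integer lies in `(m - 1)·ℤ[1/m]` exactly when `m - 1` divides it, because `m - 1` and `m`
are coprime. -/
lemma intCast_mem_J (N : ℤ) : (N : ℝ) ∈ J m ↔ ((m : ℤ) - 1) ∣ N := by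
  constructor
  · rintro ⟨_, ⟨M, s, rfl⟩, h⟩
    have hs : -((-s).toNat : ℤ) ≤ s := by omega
    rw [rescale M hs, zpow_neg, zpow_natCast] at h
    have hp : (m : ℝ) ^ (-s).toNat ≠ 0 := pow_ne_zero _ (mpos m).ne'
    have h2 : N * (m : ℤ) ^ (-s).toNat
        = ((m : ℤ) - 1) * (M * (m : ℤ) ^ (s - -((-s).toNat : ℤ)).toNat) := by
      have : (N : ℝ) * (m : ℝ) ^ (-s).toNat
        = ((m : ℝ) - 1) * (M * (m : ℝ) ^ (s - -((-s).toNat : ℤ)).toNat) := by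
        rw [h]
        push_cast
        field_simp
      exact_mod_cast this
    have hc : IsCoprime ((m : ℤ) - 1) ((m : ℤ) ^ (-s).toNat) :=
      IsCoprime.pow_right ⟨-1, 1, by ring⟩
    exact hc.dvd_of_dvd_mul_right ⟨_, h2⟩
  · rintro ⟨k, rfl⟩
    exact ⟨k, intCast_mem _ k, by push_cast; ring⟩

/-! ### Piecewise affine maps on intervals -/

/-- `PL m F a b`: on `[a, b]` the function `F` is a finite concatenation of increasing affine
pieces whose slopes are powers of `m` and whose end points, together with their images, are in
`ℤ[1/m]`. Degenerate pieces `[a, a]` are allowed. -/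
inductive PL (m : ℕ) [NeZero m] (F : ℝ → ℝ) : ℝ → ℝ → Prop
  | aff {a b : ℝ} (s : ℤ) (ha : a ∈ zRing m) (hb : b ∈ zRing m) (hab : a ≤ b)
      (hF : F a ∈ zRing m) (h : ∀ x ∈ Icc a b, F x = F a + (m : ℝ) ^ s * (x - a)) : PL m F a b
  | trans {a b c : ℝ} (h₁ : PL m F a b) (h₂ : PL m F b c) : PL m F a c

namespace PL

variable {F G : ℝ → ℝ} {a b c d : ℝ}

lemma le (h : PL m F a b) : a ≤ b := by
  induction h with
  | aff s ha hb hab hF h => exact hab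
  | trans h₁ h₂ i₁ i₂ => exact i₁.trans i₂

lemma left (h : PL m F a b) : a ∈ zRing m := by
  induction h with
  | aff s ha hb hab hF h => exact ha
  | trans h₁ h₂ i₁ i₂ => exact i₁

lemma right (h : PL m F a b) : b ∈ zRing m := by
  induction h with
  | aff s ha hb hab hF h => exact hb
  | trans h₁ h₂ i₁ i₂ => exact i₂

lemma map_left (h : PL m F a b) : F a ∈ zRing m := by
  induction h with
  | aff s ha hb hab hF h => exact hF
  | trans h₁ h₂ i₁ i₂ => exact i₁

lemma map_right (h : PL m F a b) : F b ∈ zRing m := by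
  induction h with
  | aff s ha hb hab hF h =>
    rw [h _ (right_mem_Icc.2 hab)]
    exact add_mem hF (mul_mem (zpow_mem s) (sub_mem hb ha))
  | trans h₁ h₂ i₁ i₂ => exact i₂

lemma point (ha : a ∈ zRing m) (hF : F a ∈ zRing m) : PL m F a a :=
  aff 0 ha ha le_rfl hF fun x hx => by
    rw [Icc_self, mem_singleton_iff] at hx
    simp [hx]

/-- A `PL` map changes lengths only by elements of `(m - 1)·ℤ[1/m]`. -/
lemma sub_mem_J (h : PL m F a b) : F b - F a - (b - a) ∈ J m := by
  induction h with
  | @aff a b s ha hb hab hF h =>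
    rw [h _ (right_mem_Icc.2 hab)]
    convert J_mul (zpow_sub_one_mem (m := m) s) (sub_mem hb ha) using 1
    ring
  | trans h₁ h₂ i₁ i₂ =>
    convert add_mem i₁ i₂ using 1
    ring

lemma congr (h : PL m F a b) (hFG : ∀ x ∈ Icc a b, F x = G x) : PL m G a b := by
  induction h with
  | @aff a b s ha hb hab hF h =>
    have h0 := hFG _ (left_mem_Icc.2 hab)
    exact aff s ha hb hab (h0 ▸ hF) fun x hx => by rw [← hFG x hx, ← h0, h x hx]
  | trans h₁ h₂ i₁ i₂ =>
    exact trans (i₁ fun x hx => hFG x ⟨hx.1, hx.2.trans h₂.le⟩)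
      (i₂ fun x hx => hFG x ⟨h₁.le.trans hx.1, hx.2⟩)

lemma strictMonoOn (h : PL m F a b) : StrictMonoOn F (Icc a b) := by
  induction h with
  | @aff a b s ha hb hab hF h =>
    intro x hx y hy hxy
    rw [h x hx, h y hy]
    have := mul_lt_mul_of_pos_left hxy (zpos m s)
    linarith
  | trans h₁ h₂ i₁ i₂ =>
    rw [← Icc_union_Icc_eq_Icc h₁.le h₂.le]
    exact i₁.union i₂ (isGreatest_Icc h₁.le) (isLeast_Icc h₂.le)

lemma surj (h : PL m F a b) {y : ℝ} (hy : y ∈ Icc (F a) (F b)) : ∃ x ∈ Icc a b, F x = y := by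
  induction h with
  | @aff a b s ha hb hab hF h =>
    have hs := zpos m s
    rw [h _ (right_mem_Icc.2 hab)] at hy
    have hx : a + (y - F a) / (m : ℝ) ^ s ∈ Icc a b := by
      refine ⟨by linarith [div_nonneg (sub_nonneg.2 hy.1) hs.le], ?_⟩
      have : (y - F a) / (m : ℝ) ^ s ≤ b - a := by
        rw [div_le_iff₀ hs]; linarith [hy.2]
      linarith
    refine ⟨_, hx, ?_⟩
    rw [h _ hx]
    field_simp
    ring
  | @trans a b c h₁ h₂ i₁ i₂ =>
    rcases le_total y (F b) with hb | hb
    · obtain ⟨x, hx, e⟩ := i₁ ⟨hy.1, hb⟩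
      exact ⟨x, ⟨hx.1, hx.2.trans h₂.le⟩, e⟩
    · obtain ⟨x, hx, e⟩ := i₂ ⟨hb, hy.2⟩
      exact ⟨x, ⟨h₁.le.trans hx.1, hx.2⟩, e⟩

lemma restrict (h : PL m F a b) (hc : c ∈ zRing m) (hd : d ∈ zRing m) (hac : a ≤ c) (hcd : c ≤ d)
    (hdb : d ≤ b) : PL m F c d := by
  induction h generalizing c d with
  | @aff a b s ha hb hab hF h =>
    have hcm : c ∈ Icc a b := ⟨hac, hcd.trans hdb⟩
    refine aff s hc hd hcd ?_ fun x hx => ?_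
    · rw [h c hcm]
      exact add_mem hF (mul_mem (zpow_mem s) (sub_mem hc ha))
    · rw [h c hcm, h x ⟨hac.trans hx.1, hx.2.trans hdb⟩]
      ring
  | @trans a e b h₁ h₂ i₁ i₂ =>
    rcases le_total d e with hde | hde
    · exact i₁ hc hd hac hcd hde
    rcases le_total c e with hce | hce
    · exact (i₁ hc h₁.right hac hce le_rfl).trans (i₂ h₁.right hd le_rfl hde hdb)
    · exact i₂ hc hd hce hcd hdb

/-- Precomposition of a `PL` map with one affine piece. -/
lemma comp_aff (h : PL m G c d) (s : ℤ) (ha : a ∈ zRing m) (hab : a ≤ b) (hFa : F a = c)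
    (hFb : F b = d) (hF : ∀ x ∈ Icc a b, F x = F a + (m : ℝ) ^ s * (x - a)) :
    PL m (G ∘ F) a b := by
  have hs := zpos m s
  induction h generalizing a b with
  | @aff c d t hc hd hcd hG h =>
    have hba : b = a + (m : ℝ) ^ (-s) * (d - c) := by
      rw [← hFb, ← hFa, hF _ (right_mem_Icc.2 hab), zpow_neg]
      field_simp
      ring
    refine aff (t + s) ha ?_ hab (by simpa [hFa] using hG) fun x hx => ?_
    · rw [hba]
      exact add_mem ha (mul_mem (zpow_mem _) (sub_mem hd hc))
    · have hFx := hF x hx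
      have hx1 := mul_nonneg hs.le (sub_nonneg.2 hx.1)
      have hx2 := mul_le_mul_of_nonneg_left (sub_le_sub_right hx.2 a) hs.le
      have hb' := hF _ (right_mem_Icc.2 hab)
      simp only [Function.comp]
      rw [h (F x) ⟨by linarith, by linarith⟩, hFx, hFa, zpow_add₀ (mpos m).ne']
      ring
  | @trans c e d h₁ h₂ i₁ i₂ =>
    -- the preimage of the intermediate point `e` under the affine piece
    set p := a + (m : ℝ) ^ (-s) * (e - c) with hp
    have hb' := hF _ (right_mem_Icc.2 hab)
    have hsp : (m : ℝ) ^ s * (p - a) = e - c := by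
      rw [hp, zpow_neg]
      field_simp
      ring
    have hap : a ≤ p := by
      have := mul_nonneg (zpos m (-s)).le (sub_nonneg.2 h₁.le)
      linarith
    have hpb : p ≤ b := by
      have h3 : (m : ℝ) ^ s * p ≤ (m : ℝ) ^ s * b := by
        have := h₂.le
        linarith
      exact le_of_mul_le_mul_left h3 hs
    have hFp : F p = e := by
      rw [hF p ⟨hap, hpb⟩, hsp, hFa]
      ring
    have hpz : p ∈ zRing m :=
      add_mem ha (mul_mem (zpow_mem _) (sub_mem h₁.right h₁.left))
    refine (i₁ ha hap hFa hFp fun x hx => hF x ⟨hx.1, hx.2.trans hpb⟩).trans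
      (i₂ hpz hpb hFp hFb fun x hx => ?_)
    rw [hF x ⟨hap.trans hx.1, hx.2⟩, hF p ⟨hap, hpb⟩]
    ring

lemma comp (hF : PL m F a b) (hG : PL m G (F a) (F b)) : PL m (G ∘ F) a b := by
  induction hF with
  | @aff a b s ha hb hab hFa h => exact hG.comp_aff s ha hab rfl rfl h
  | @trans a e b h₁ h₂ i₁ i₂ =>
    have l₁ := h₁.strictMonoOn.monotoneOn (left_mem_Icc.2 h₁.le) (right_mem_Icc.2 h₁.le) h₁.le
    have l₂ := h₂.strictMonoOn.monotoneOn (left_mem_Icc.2 h₂.le) (right_mem_Icc.2 h₂.le) h₂.le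
    exact (i₁ (hG.restrict h₁.map_left h₁.map_right le_rfl l₁ l₂)).trans
      (i₂ (hG.restrict h₂.map_left h₂.map_right l₁ l₂ le_rfl))

lemma inv (hF : PL m F a b) (hG : ∀ x ∈ Icc a b, G (F x) = x) : PL m G (F a) (F b) := by
  induction hF with
  | @aff a b s ha hb hab hFa h =>
    have hp : PL m F a b := aff s ha hb hab hFa h
    refine aff (-s) hFa hp.map_right ?_ ?_ fun y hy => ?_
    · exact hp.strictMonoOn.monotoneOn (left_mem_Icc.2 hab) (right_mem_Icc.2 hab) hab
    · rwa [hG a (left_mem_Icc.2 hab)]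
    · obtain ⟨x, hx, rfl⟩ := hp.surj hy
      have hs := zpos m s
      rw [hG x hx, hG a (left_mem_Icc.2 hab), h x hx, zpow_neg]
      field_simp
      ring
  | @trans a e b h₁ h₂ i₁ i₂ =>
    exact (i₁ fun x hx => hG x ⟨hx.1, hx.2.trans h₂.le⟩).trans
      (i₂ fun x hx => hG x ⟨h₁.le.trans hx.1, hx.2⟩)

/-- Conjugation by translations. -/
lemma shift (hF : PL m F a b) {t u : ℝ} (ht : t ∈ zRing m) (hu : u ∈ zRing m) :
    PL m (fun x => F (x - t) + u) (a + t) (b + t) := by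
  induction hF with
  | @aff a b s ha hb hab hFa h =>
    refine aff s (add_mem ha ht) (add_mem hb ht) (by linarith) ?_ fun x hx => ?_
    · simpa using add_mem hFa hu
    · simp only [add_sub_cancel_right]
      rw [h (x - t) ⟨by linarith [hx.1], by linarith [hx.2]⟩]
      ring
  | @trans a e b h₁ h₂ i₁ i₂ => exact i₁.trans i₂

end PL
end PLm

namespace PLm

/-! ### Subdivisions and `PL` maps -/

variable {m : ℕ} [NeZero m] {F G : ℝ → ℝ} {a b c d r : ℝ}

/-- A subdivision as in `IsPLmLift` gives a `PL` map. -/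
lemma PL.of_subdivision {n : ℕ} {a : Fin (n + 1) → ℝ} (ha : StrictMono a)
    (hz : ∀ i, a i ∈ ZInvM m) (hF : ∀ i, F (a i) ∈ ZInvM m)
    (h : ∀ i : Fin n, ∃ (s : ℤ) (β : ℝ),
        ∀ x ∈ Icc (a i.castSucc) (a i.succ), F x = (m : ℝ) ^ s * x + β) (i : Fin (n + 1)) :
    PL m F (a 0) (a i) := by
  induction i using Fin.induction with
  | zero => exact PL.point (hz 0) (hF 0)
  | succ i ih =>
    obtain ⟨s, β, hs⟩ := h i
    have hle : a i.castSucc ≤ a i.succ := ha.monotone (Fin.castSucc_lt_succ).le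
    refine ih.trans (PL.aff s (hz _) (hz _) hle (hF _) fun x hx => ?_)
    rw [hs x hx, hs _ (left_mem_Icc.2 hle)]
    ring

/-- A `PL` map has a finite set of breakpoints, such that it is affine on every interval whose
interior misses that set. -/
lemma PL.exists_finset (h : PL m F a b) :
    ∃ S : Finset ℝ, a ∈ S ∧ b ∈ S ∧ (∀ x ∈ S, x ∈ Icc a b ∧ x ∈ zRing m ∧ F x ∈ zRing m) ∧
      ∀ x ∈ S, ∀ y ∈ S, x < y → (∀ z ∈ S, ¬ (x < z ∧ z < y)) →
        ∃ (s : ℤ) (β : ℝ), ∀ t ∈ Icc x y, F t = (m : ℝ) ^ s * t + β := by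
  suffices H : ∃ S : Finset ℝ, a ∈ S ∧ b ∈ S ∧
      (∀ x ∈ S, x ∈ Icc a b ∧ x ∈ zRing m ∧ F x ∈ zRing m) ∧
      ∀ x y, a ≤ x → y ≤ b → (∀ z ∈ S, ¬ (x < z ∧ z < y)) →
        ∃ (s : ℤ) (β : ℝ), ∀ t ∈ Icc x y, F t = (m : ℝ) ^ s * t + β by
    obtain ⟨S, h1, h2, h3, h4⟩ := H
    exact ⟨S, h1, h2, h3, fun x hx y hy _ => h4 x y (h3 x hx).1.1 (h3 y hy).1.2⟩
  induction h with
  | @aff a b s ha hb hab hF h =>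
    have hp : PL m F a b := PL.aff s ha hb hab hF h
    refine ⟨{a, b}, by simp, by simp, ?_, fun x y hx hy _ =>
      ⟨s, F a - (m : ℝ) ^ s * a, fun t ht => ?_⟩⟩
    · intro x hx
      rw [Finset.mem_insert, Finset.mem_singleton] at hx
      rcases hx with rfl | rfl
      · exact ⟨left_mem_Icc.2 hab, ha, hF⟩
      · exact ⟨right_mem_Icc.2 hab, hb, hp.map_right⟩
    · rw [h t ⟨hx.trans ht.1, ht.2.trans hy⟩]
      ring
  | @trans a c b h₁ h₂ i₁ i₂ =>
    obtain ⟨S, a1, a2, a3, a4⟩ := i₁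
    obtain ⟨T, b1, b2, b3, b4⟩ := i₂
    refine ⟨S ∪ T, by simp [a1], by simp [b2], ?_, fun x y hx hy hz => ?_⟩
    · intro x hx
      rcases Finset.mem_union.1 hx with hx | hx
      · exact ⟨⟨(a3 x hx).1.1, (a3 x hx).1.2.trans h₂.le⟩, (a3 x hx).2⟩
      · exact ⟨⟨h₁.le.trans (b3 x hx).1.1, (b3 x hx).1.2⟩, (b3 x hx).2⟩
    · have hc := hz c (Finset.mem_union_left _ a2)
      rcases le_or_gt y c with hyc | hyc
      · exact a4 x y hx hyc fun z hzS => hz z (Finset.mem_union_left _ hzS)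
      · exact b4 x y (not_lt.1 fun h => hc ⟨h, hyc⟩) hy
          fun z hzS => hz z (Finset.mem_union_right _ hzS)

/-- The increasing enumeration of the breakpoint set is a subdivision as in `IsPLmLift`. -/
lemma PL.isPLmLift (h : PL m F 0 r) (hF : StrictMono F)
    (hper : ∀ x, F (x + r) = F x + r) : IsPLmLift m r r F := by
  refine ⟨hF, hper, ?_⟩
  obtain ⟨S, h0, h1, h2, h3⟩ := h.exists_finset
  obtain ⟨n, hn⟩ : ∃ n, S.card = n + 1 :=
    Nat.exists_eq_succ_of_ne_zero (Finset.card_ne_zero_of_mem h0)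
  have hmem : ∀ i, S.orderEmbOfFin hn i ∈ S := S.orderEmbOfFin_mem hn
  have hsurj : ∀ x ∈ S, ∃ i, S.orderEmbOfFin hn i = x := fun x hx => by
    have : x ∈ Set.range (S.orderEmbOfFin hn) := by rwa [Finset.range_orderEmbOfFin]
    exact this
  refine ⟨n, S.orderEmbOfFin hn, (S.orderEmbOfFin hn).strictMono, ?_, ?_,
    fun i => (h2 _ (hmem i)).2.1, fun i => (h2 _ (hmem i)).2.2, fun i => ?_⟩
  · obtain ⟨i, hi⟩ := hsurj 0 h0
    refine le_antisymm ?_ (h2 _ (hmem 0)).1.1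
    exact hi ▸ (S.orderEmbOfFin hn).monotone (Fin.zero_le i)
  · obtain ⟨i, hi⟩ := hsurj r h1
    refine le_antisymm (h2 _ (hmem _)).1.2 ?_
    exact hi.symm.le.trans ((S.orderEmbOfFin hn).monotone (Fin.le_last i))
  · refine h3 _ (hmem _) _ (hmem _) ((S.orderEmbOfFin hn).strictMono Fin.castSucc_lt_succ) ?_
    rintro z hz ⟨hz1, hz2⟩
    obtain ⟨j, rfl⟩ := hsurj z hz
    rw [OrderEmbedding.lt_iff_lt] at hz1 hz2
    rw [Fin.lt_def] at hz1 hz2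
    simp at hz1 hz2
    omega

/-! ### `PL` homeomorphisms between intervals -/

/-- There is a `PL` homeomorphism from `[0, a]` onto `[0, b]`,
fixing the left end point. -/
def Iso (m : ℕ) [NeZero m] (a b : ℝ) : Prop := ∃ h : ℝ → ℝ, PL m h 0 a ∧ h 0 = 0 ∧ h a = b

lemma Iso.scale (s : ℤ) (ha : a ∈ zRing m) (h0 : 0 ≤ a) : Iso m a ((m : ℝ) ^ s * a) :=
  ⟨fun x => (m : ℝ) ^ s * x, PL.aff s (zero_mem _) ha h0 (by simp) (by simp), by simp, rfl⟩

lemma Iso.add (h₁ : Iso m a b) (h₂ : Iso m c d) : Iso m (a + c) (b + d) := by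
  obtain ⟨f, hf, f0, fa⟩ := h₁
  obtain ⟨g, hg, g0, gc⟩ := h₂
  have hb : b ∈ zRing m := fa ▸ hf.map_right
  have hg' := hg.shift hf.right hb
  rw [zero_add, add_comm c a] at hg'
  have e : ∀ x, a ≤ x → g (x - a) + b = if x ≤ a then f x else g (x - a) + b := by
    intro x hx
    split_ifs with h
    · obtain rfl : x = a := le_antisymm h hx
      simp [g0, fa]
    · rfl
  refine ⟨fun x => if x ≤ a then f x else g (x - a) + b,
    (hf.congr fun x hx => by simp [hx.2]).trans (hg'.congr fun x hx => e x hx.1), ?_, ?_⟩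
  · simp [hf.le, f0]
  · have hc := hg.le
    simp only []
    rw [← e (a + c) (by linarith)]
    simp [gc, add_comm]

lemma Iso.trans (h₁ : Iso m a b) (h₂ : Iso m b c) : Iso m a c := by
  obtain ⟨f, hf, f0, fa⟩ := h₁
  obtain ⟨g, hg, g0, gc⟩ := h₂
  exact ⟨g ∘ f, hf.comp (by rwa [f0, fa]), by simp [f0, g0], by simp [fa, gc]⟩

lemma Iso.symm (h : Iso m a b) : Iso m b a := by
  obtain ⟨f, hf, f0, fa⟩ := h
  have hi : ∀ x ∈ Icc 0 a, Function.invFunOn f (Icc 0 a) (f x) = x :=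
    fun x hx => hf.strictMonoOn.injOn.leftInvOn_invFunOn hx
  have := hf.inv hi
  rw [f0, fa] at this
  refine ⟨_, this, ?_, ?_⟩
  · simpa [f0] using hi 0 (left_mem_Icc.2 hf.le)
  · simpa [fa] using hi a (right_mem_Icc.2 hf.le)

/-- Replacing one piece of length `m^t` by one of length `m^(t+1)` changes the number of units of
length `m^t` by `m - 1`; iterate this `k` times. -/
lemma Iso.units (t : ℤ) (A k : ℕ) (hA : 1 ≤ A) :
    Iso m (A * (m : ℝ) ^ t) ((A + k * ((m : ℝ) - 1)) * (m : ℝ) ^ t) := by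
  have hm1 : (0 : ℝ) ≤ (m : ℝ) - 1 :=
    sub_nonneg.2 (Nat.one_le_cast.2 (Nat.pos_of_ne_zero (NeZero.ne m)))
  have hA1 : (0 : ℝ) ≤ (A : ℝ) - 1 := sub_nonneg.2 (Nat.one_le_cast.2 hA)
  have ht := zpos m t
  induction k with
  | zero => simpa using Iso.scale 0 (mul_mem (natCast_mem (zRing m) A) (zpow_mem t)) (by positivity)
  | succ k ih =>
    refine ih.trans ?_
    have h1 : Iso m ((A - 1 + k * ((m : ℝ) - 1)) * (m : ℝ) ^ t) _ := Iso.scale 0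
      (mul_mem (add_mem (sub_mem (natCast_mem _ A) (one_mem _))
        (mul_mem (natCast_mem _ k) (sub_mem (natCast_mem _ m) (one_mem _)))) (zpow_mem t))
      (by positivity)
    have h2 : Iso m ((m : ℝ) ^ t) _ := Iso.scale 1 (zpow_mem t) ht.le
    convert h1.add h2 using 1
    · ring
    · push_cast
      simp only [zpow_zero, zpow_one]
      ring

/-- Intervals whose lengths are congruent modulo `(m - 1)·ℤ[1/m]` are `PL` homeomorphic. -/
lemma iso_of_sub_mem (ha : a ∈ zRing m) (ha0 : 0 < a) (hb0 : 0 < b) (h : a - b ∈ J m) :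
    Iso m a b := by
  -- the statement for a pair written in units of a common power of `m`
  have key : ∀ (A C : ℕ) (t : ℤ) (x y : ℝ), 0 < x → x = A * (m : ℝ) ^ t →
      y = x + ((m : ℝ) - 1) * (C * (m : ℝ) ^ t) → Iso m x y := by
    rintro A C t x y hx rfl rfl
    have hA : 1 ≤ A := by
      rcases Nat.eq_zero_or_pos A with rfl | h
      · simp at hx
      · exact h
    have := Iso.units (m := m) t A C hA
    convert this using 1
    ring
  obtain ⟨N, s, rfl⟩ := ha
  obtain ⟨_, ⟨M, t, rfl⟩, h⟩ := h
  rw [rescale N (min_le_left s t)] at *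
  rw [rescale M (min_le_right s t)] at h
  set u := min s t
  set A := N * (m : ℤ) ^ (s - u).toNat
  set C := M * (m : ℤ) ^ (t - u).toNat
  have hu := zpos m u
  have hA : 0 ≤ A := by
    have : (0 : ℝ) < A := by by_contra hn; exact absurd ha0 (by nlinarith)
    exact_mod_cast this.le
  obtain ⟨A', hA'⟩ := Int.eq_ofNat_of_zero_le hA
  rcases le_total C 0 with hC | hC
  · obtain ⟨C', hC'⟩ := Int.eq_ofNat_of_zero_le (neg_nonneg.2 hC)
    have hCC : (C : ℝ) = -(C' : ℝ) := by
      have : C = -(C' : ℤ) := by omega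
      rw [this]
      simp
    rw [hCC] at h
    refine key A' C' u _ _ ha0 (by rw [hA']; simp) ?_
    linarith
  · obtain ⟨C', hC'⟩ := Int.eq_ofNat_of_zero_le hC
    have hb : b = ((A - (m - 1) * C : ℤ) : ℝ) * (m : ℝ) ^ u := by
      push_cast
      linarith
    have hB : 0 ≤ A - (m - 1) * C := by
      have : (0 : ℝ) < ((A - (m - 1) * C : ℤ) : ℝ) := by
        by_contra hn; exact absurd hb0 (by rw [hb]; nlinarith)
      exact_mod_cast this.le
    obtain ⟨B', hB'⟩ := Int.eq_ofNat_of_zero_le hB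
    refine (key B' C' u _ _ hb0 (by rw [hb, hB']; simp) ?_).symm
    rw [hC'] at h
    push_cast at h
    linarith

end PLm

namespace PLm

/-! ### Lifts of circle maps and their normalisation -/

section Lifts

variable {r : ℝ} {A B : ℝ → ℝ}

lemma coe_eq_iff {x y : ℝ} : (x : AddCircle r) = y ↔ ∃ k : ℤ, x = y + k * r := by
  rw [QuotientAddGroup.eq_iff_sub_mem, AddSubgroup.mem_zmultiples_iff]
  refine exists_congr fun k => ?_
  rw [zsmul_eq_mul, eq_sub_iff_add_eq, eq_comm, add_comm]

lemma map_add_int_mul (hA : ∀ x, A (x + r) = A x + r) (x : ℝ) (k : ℤ) :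
    A (x + k * r) = A x + k * r := by
  have hp : Function.Periodic (fun x => A x - x) r := fun x => by simp only [hA]; ring
  have : A (x + k * r) - (x + k * r) = A x - x := hp.int_mul k x
  linarith

/-- Two increasing lifts of the same circle map differ by a constant multiple of the period. -/
lemma lift_unique (hr : 0 < r) (hA : StrictMono A) (hB : StrictMono B)
    (hAr : ∀ x, A (x + r) = A x + r) (hBr : ∀ x, B (x + r) = B x + r)
    (h : ∀ x, (A x : AddCircle r) = B x) : ∃ k : ℤ, ∀ x, A x = B x + k * r := by
  obtain ⟨k, hk⟩ := coe_eq_iff.1 (h 0)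
  refine ⟨k, fun x => ?_⟩
  -- reduce to a fundamental domain
  obtain ⟨n, y, hy0, hyr, rfl⟩ : ∃ (n : ℤ) (y : ℝ), 0 ≤ y ∧ y < r ∧ x = y + n * r := by
    refine ⟨⌊x / r⌋, x - ⌊x / r⌋ * r, ?_, ?_, by ring⟩
    · have := (le_div_iff₀ hr).1 (Int.floor_le (x / r))
      linarith
    · have := (div_lt_iff₀ hr).1 (Int.lt_floor_add_one (x / r))
      linarith
  rw [map_add_int_mul hAr, map_add_int_mul hBr]
  obtain ⟨j, hj⟩ := coe_eq_iff.1 (h y)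
  have a1 := hA.monotone hy0
  have a2 := hA hyr
  have b1 := hB.monotone hy0
  have b2 := hB hyr
  have ar := hAr 0
  have br := hBr 0
  rw [zero_add] at ar br
  have c1 : ((j - k : ℤ) : ℝ) * r < 1 * r := by push_cast; linarith
  have c2 : (-1 : ℝ) * r < ((j - k : ℤ) : ℝ) * r := by push_cast; linarith
  have d1 : (j - k : ℤ) < 1 := by exact_mod_cast lt_of_mul_lt_mul_right c1 hr.le
  have d2 : -1 < (j - k : ℤ) := by exact_mod_cast lt_of_mul_lt_mul_right c2 hr.le
  obtain rfl : j = k := by omega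
  rw [hj]
  ring

lemma iterate_add_period (hA : ∀ x, A (x + r) = A x + r) (n : ℕ) (x : ℝ) :
    A^[n] (x + r) = A^[n] x + r := by
  induction n generalizing x with
  | zero => rfl
  | succ n ih => rw [Function.iterate_succ_apply, hA, ih, Function.iterate_succ_apply]

lemma coe_iterate {f : Equiv.Perm (AddCircle r)} (h : ∀ x : ℝ, f ↑x = ↑(A x)) (n : ℕ) (x : ℝ) :
    (f ^ n) ↑x = ↑(A^[n] x) := by
  induction n with
  | zero => rfl
  | succ n ih => rw [pow_succ', Equiv.Perm.mul_apply, ih, h, Function.iterate_succ_apply']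

/-- Translating a lift by a multiple of the period. -/
lemma iterate_add_const (hA : ∀ x, A (x + r) = A x + r) (k : ℤ) (n : ℕ) (x : ℝ) :
    (fun x => A x + k * r)^[n] x = A^[n] x + n * k * r := by
  induction n with
  | zero => simp
  | succ n ih =>
    rw [Function.iterate_succ_apply', ih, Function.iterate_succ_apply']
    have := map_add_int_mul hA (A^[n] x) (n * k)
    push_cast at this
    rw [this]
    push_cast
    ring

end Lifts

/-- The normalised lift of an element of `T_{r,m}` of order dividing `q` and rotation number `1/q`:
its `q`-th iterate is the translation by the period `r`. -/
structure NLift (m : ℕ) [NeZero m] (r : ℝ) (q : ℕ) (F : ℝ → ℝ) : Prop where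
  mono : StrictMono F
  per : ∀ x, F (x + r) = F x + r
  pl : PL m F 0 r
  iter : ∀ x, F^[q] x = x + r

/-- A finite order element with rotation number `1/q` has a normalised lift `F`. The rotation
number selects the lift, and `0 < F 0 < F^[q] 0 = r` identifies `F 0` with the representative of
`f 0` in `(0, r)`. -/
lemma exists_nlift {m r q : ℕ} [NeZero m] (hr : 1 ≤ r) (hq : 2 ≤ q)
    {f : Equiv.Perm (AddCircle (r : ℝ))} (hf : InT r m f) (ho : orderOf f = q)
    (hrot : HasRotNum r f ((1 / (q : ℝ) : ℝ) : AddCircle (1 : ℝ))) {a : ℝ}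
    (ha0 : 0 < a) (har : a < r) (hv : f ((0 : ℝ) : AddCircle (r : ℝ)) = (a : AddCircle (r : ℝ))) :
    ∃ F : ℝ → ℝ, NLift m r q F ∧ (∀ x : ℝ, f ↑x = ↑(F x)) ∧ F 0 = a := by
  have hr0 : (0 : ℝ) < r := by exact_mod_cast hr
  have hq0 : (0 : ℝ) < q := by exact_mod_cast (by omega : 0 < q)
  obtain ⟨F₀, ⟨hF₀, hper₀, n, b, hb, hb0, hbr, hbz, hFz, haff⟩, hlift₀⟩ := hf
  have hpl₀ : PL m F₀ 0 r := by
    have := PL.of_subdivision hb hbz hFz haff (Fin.last n)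
    rwa [hb0, hbr] at this
  obtain ⟨G, hG, hperG, hliftG, L, hL, hLq⟩ := hrot
  have hGinj : Function.Injective G := by
    intro x y hxy
    have hc : ((x : ℝ) : AddCircle (r : ℝ)) = y := f.injective (by rw [hliftG, hliftG, hxy])
    obtain ⟨k, rfl⟩ := coe_eq_iff.1 hc
    rw [map_add_int_mul hperG] at hxy
    linarith
  have hGs : StrictMono G := hG.strictMono_of_injective hGinj
  obtain ⟨k, hk⟩ := lift_unique hr0 hGs hF₀ hperG hper₀
    fun x => by rw [← hliftG, ← hlift₀]
  obtain ⟨p, hp⟩ := lift_unique hr0 (hGs.iterate q) strictMono_id (iterate_add_period hperG q)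
    (fun x => rfl) (fun x => by
      rw [← coe_iterate hliftG, ← ho, pow_orderOf_eq_one]; rfl)
  simp only [id] at hp
  -- the limit defining the rotation number, computed along multiples of `q`
  have hLp : L = p / q := by
    have h1 : ∀ n : ℕ, G^[q * n] 0 = n * p * r := by
      intro n
      rw [Function.iterate_mul]
      have e : G^[q] = fun x => id x + (p : ℝ) * (r : ℝ) := funext hp
      rw [e, iterate_add_const (fun _ => rfl)]
      simp
    have h2 : Tendsto (fun n : ℕ => q * n) atTop atTop :=
      tendsto_id.const_mul_atTop' (by omega)
    refine tendsto_nhds_unique (hL.comp h2) (tendsto_const_nhds.congr' ?_)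
    filter_upwards [eventually_gt_atTop 0] with n hn
    have hn0 : (n : ℝ) ≠ 0 := by exact_mod_cast hn.ne'
    simp only [Function.comp, h1]
    push_cast
    field_simp
  obtain ⟨j, hj⟩ := coe_eq_iff.1 hLq
  have hpj : (p : ℝ) = 1 + j * q := by
    rw [hLp] at hj
    field_simp at hj
    linarith
  set F : ℝ → ℝ := fun x => G x + (-j : ℤ) * r with hFdef
  have hFF₀ : ∀ x, F x = F₀ x + (k - j : ℤ) * r := fun x => by
    simp only [hFdef, hk]; push_cast; ring
  have hF : NLift m r q F := by
    refine ⟨fun x y h => by simpa [hFdef] using hGs h, fun x => ?_, ?_, fun x => ?_⟩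
    · simp only [hFdef, hperG]; ring
    · have hz : ((k - j : ℤ) : ℝ) * r ∈ zRing m := mul_mem (intCast_mem _ _) (natCast_mem _ _)
      have := hpl₀.shift (zero_mem _) hz
      simp only [add_zero, sub_zero] at this
      exact this.congr fun x _ => (hFF₀ x).symm
    · rw [hFdef, iterate_add_const hperG, hp, hpj]
      push_cast
      ring
  have hFl : ∀ x : ℝ, f ↑x = ↑(F x) := fun x => by
    rw [hliftG]
    exact coe_eq_iff.2 ⟨j, by simp only [hFdef]; push_cast; ring⟩
  refine ⟨F, hF, hFl, ?_⟩
  have hq1 : F^[q] 0 = r := by rw [hF.iter, zero_add]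
  have h0 : 0 < F 0 := by
    by_contra hn
    have : F^[q] 0 ≤ 0 :=
      hF.mono.monotone.antitone_iterate_of_map_le (not_lt.1 hn) (Nat.zero_le q)
    rw [hq1] at this
    exact absurd this (not_le.2 hr0)
  have h1 : F 0 < r := by
    have := hF.mono.strictMono_iterate_of_lt_map h0 (show 1 < q by omega)
    simpa [hq1] using this
  obtain ⟨i, hi⟩ := coe_eq_iff.1 ((hFl 0).symm.trans hv)
  have c1 : (i : ℝ) * r < 1 * r := by linarith
  have c2 : (-1 : ℝ) * r < i * r := by linarith
  have d1 : i < 1 := by exact_mod_cast lt_of_mul_lt_mul_right c1 hr0.le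
  have d2 : -1 < i := by exact_mod_cast lt_of_mul_lt_mul_right c2 hr0.le
  obtain rfl : i = 0 := by omega
  simpa using hi

/-- A periodic `PL` map is `PL` on every interval with end points in `ℤ[1/m]`. -/
lemma PL.of_period {m : ℕ} [NeZero m] {r : ℝ} {F : ℝ → ℝ} (hr : 0 < r) (h : PL m F 0 r)
    (hper : ∀ x, F (x + r) = F x + r) {a b : ℝ} (ha : a ∈ zRing m) (hb : b ∈ zRing m)
    (hab : a ≤ b) : PL m F a b := by
  have hstep : ∀ k : ℤ, PL m F (k * r) ((k + 1) * r) := by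
    intro k
    have hz : (k : ℝ) * r ∈ zRing m := mul_mem (intCast_mem _ _) h.right
    have := h.shift hz hz
    rw [zero_add, show r + (k : ℝ) * r = (k + 1) * r by ring] at this
    refine this.congr fun x _ => ?_
    rw [← map_add_int_mul hper, sub_add_cancel]
  have hlong : ∀ (k : ℤ) (n : ℕ), PL m F (k * r) ((k + n) * r) := by
    intro k n
    induction n with
    | zero => simpa using PL.point (hstep k).left (hstep k).map_left
    | succ n ih =>
      have := hstep (k + n)
      push_cast at this ⊢
      rw [← add_assoc]
      exact ih.trans this
  have h1 : (⌊a / r⌋ : ℝ) * r ≤ a := (le_div_iff₀ hr).1 (Int.floor_le _)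
  have h2 : b ≤ (⌈b / r⌉ : ℝ) * r := (div_le_iff₀ hr).1 (Int.le_ceil _)
  have h3 : ⌊a / r⌋ ≤ ⌈b / r⌉ :=
    (Int.floor_le_ceil _).trans (Int.ceil_mono (div_le_div_of_nonneg_right hab hr.le))
  obtain ⟨n, hn⟩ := Int.eq_ofNat_of_zero_le (sub_nonneg.2 h3)
  have h4 := hlong ⌊a / r⌋ n
  have h5 : (⌈b / r⌉ : ℝ) = ⌊a / r⌋ + n := by
    have : ⌈b / r⌉ = ⌊a / r⌋ + n := by omega
    rw [this]; push_cast; ring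
  rw [← h5] at h4
  exact h4.restrict ha hb h1 hab h2

end PLm

namespace PLm

/-! ### The conjugacy criterion for lifts -/

section Conjugacy

variable {m : ℕ} [NeZero m] {r : ℝ} {q : ℕ} {F F₁ F₂ : ℝ → ℝ}

lemma NLift.surjective (hF : NLift m r q F) (hq : q ≠ 0) : Function.Surjective F := by
  intro y
  obtain ⟨n, rfl⟩ := Nat.exists_eq_succ_of_ne_zero hq
  refine ⟨F^[n] (y - r), ?_⟩
  rw [← Function.iterate_succ_apply' F n, hF.iter, sub_add_cancel]

/-- Conjugate elements send `0` to points that are congruent modulo `(m - 1)·ℤ[1/m]`. -/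
lemma sub_mem_of_conj (hr : 0 < r) (hq : q ≠ 0) (h₁ : NLift m r q F₁) (h₂ : NLift m r q F₂)
    {H : ℝ → ℝ} (hH : StrictMono H) (hHr : ∀ x, H (x + r) = H x + r) (hpl : PL m H 0 r)
    (hc : ∀ x, (H (F₁ x) : AddCircle r) = F₂ (H x)) : F₁ 0 - F₂ 0 ∈ J m := by
  obtain ⟨k, hk⟩ := lift_unique hr (h₂.mono.comp hH) (hH.comp h₁.mono)
    (fun x => by simp [hHr, h₂.per]) (fun x => by simp [hHr, h₁.per]) (fun x => (hc x).symm)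
  simp only [Function.comp] at hk
  -- comparing the `q`-th iterates shows that the lifts themselves are conjugate
  have hit : ∀ (n : ℕ) (x : ℝ), F₂^[n] (H x) = H (F₁^[n] x) + (n * k : ℤ) * r := by
    intro n x
    induction n with
    | zero => simp
    | succ n ih =>
      rw [Function.iterate_succ_apply', ih, map_add_int_mul h₂.per, hk,
        Function.iterate_succ_apply']
      push_cast
      ring
  have hk0 : k = 0 := by
    have h := hit q 0
    rw [h₁.iter, h₂.iter, hHr] at h
    have h' : ((q * k : ℤ) : ℝ) * r = 0 := by linarith
    rcases mul_eq_zero.1 h' with h' | h'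
    · have h'' : (q : ℤ) * k = 0 := by exact_mod_cast h'
      rcases mul_eq_zero.1 h'' with h'' | h''
      · exact absurd h'' (by exact_mod_cast hq)
      · exact h''
    · exact absurd h' hr.ne'
  subst hk0
  -- increasing periodic `PL` maps preserve congruence classes of differences
  have hcong : ∀ {F : ℝ → ℝ}, PL m F 0 r → (∀ x, F (x + r) = F x + r) →
      ∀ {x y : ℝ}, x ∈ zRing m → y ∈ zRing m → F y - F x - (y - x) ∈ J m := by
    intro F hF hper x y hx hy
    rcases le_total x y with h | h
    · exact (hF.of_period hr hper hx hy h).sub_mem_J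
    · convert neg_mem (hF.of_period hr hper hy hx h).sub_mem_J using 1
      ring
  have e1 := hcong hpl hHr (zero_mem _) h₁.pl.map_left
  have e2 := hcong h₂.pl h₂.per (zero_mem _) hpl.map_left
  have e3 := hk 0
  convert sub_mem e2 e1 using 1
  rw [e3]
  push_cast
  ring

section Orbit

variable (e : ℝ ≃o ℝ)

lemma zpow_zero_strictMono (he0 : 0 < e 0) : StrictMono fun k : ℤ => (e ^ k) 0 := by
  refine strictMono_int_of_lt_succ fun k => ?_
  rw [zpow_add_one, RelIso.mul_apply]
  exact (e ^ k).strictMono he0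

/-- The orbit of `0` under `e` cuts the line into fundamental domains. -/
lemma exists_zpow_le_lt (hr : 0 < r) (he : ∀ x, (e ^ q) x = x + r) (he0 : 0 < e 0)
    (y : ℝ) : ∃ k : ℤ, (e ^ k) 0 ≤ y ∧ y < (e ^ (k + 1)) 0 := by
  have hn : ∀ (n : ℤ) (x : ℝ), ((e ^ q) ^ n) x = x + n * r := by
    intro n
    induction n using Int.induction_on with
    | zero => simp
    | succ n ih =>
      intro x
      rw [zpow_add_one, RelIso.mul_apply, he, ih]
      push_cast
      ring
    | pred n ih =>
      intro x
      have h1 : (e ^ q)⁻¹ x = x - r := by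
        apply (e ^ q).injective
        rw [RelIso.apply_inv_self, he]
        ring
      rw [zpow_sub_one, RelIso.mul_apply, h1, ih]
      push_cast
      ring
  have hs := zpow_zero_strictMono e he0
  have hm : ∀ n : ℤ, (e ^ ((q : ℤ) * n)) 0 = n * r := fun n => by
    rw [zpow_mul, zpow_natCast, hn, zero_add]
  obtain ⟨k, hk1, hk2⟩ := Int.exists_greatest_of_bdd (P := fun k : ℤ => (e ^ k) 0 ≤ y)
    ⟨q * ⌈y / r⌉, fun z hz => by
      refine (hs.le_iff_le).1 (hz.trans ?_)
      simp only [hm]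
      exact (div_le_iff₀ hr).1 (Int.le_ceil _)⟩
    ⟨q * ⌊y / r⌋, by
      simp only [hm]
      exact (le_div_iff₀ hr).1 (Int.floor_le _)⟩
  refine ⟨k, hk1, not_le.1 fun h => ?_⟩
  have := hk2 _ h
  omega

/-- A homeomorphism of a fundamental domain `[0, 1] → [0, e 0]` extends to a conjugacy from the
unit translation to `e`, by `k + t ↦ e^k (g t)`. -/
lemma exists_extension (he0 : 0 < e 0)
    (horb : ∀ y, ∃ k : ℤ, (e ^ k) 0 ≤ y ∧ y < (e ^ (k + 1)) 0) {g : ℝ → ℝ}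
    (hg : StrictMonoOn g (Icc 0 1)) (hs : ∀ y ∈ Icc 0 (e 0), ∃ x ∈ Icc (0 : ℝ) 1, g x = y)
    (g0 : g 0 = 0) (g1 : g 1 = e 0) :
    ∃ Φ : ℝ ≃o ℝ, (∀ x, Φ (x + 1) = e (Φ x)) ∧ ∀ x ∈ Ico (0 : ℝ) 1, Φ x = g x := by
  set φ : ℝ → ℝ := fun x => (e ^ ⌊x⌋) (g (Int.fract x)) with hφ
  have hfr : ∀ x : ℝ, Int.fract x ∈ Icc (0 : ℝ) 1 :=
    fun x => ⟨Int.fract_nonneg x, (Int.fract_lt_one x).le⟩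
  have hlow : ∀ x, (e ^ ⌊x⌋) 0 ≤ φ x := fun x => by
    refine (e ^ ⌊x⌋).monotone ?_
    rw [← g0]
    exact hg.monotoneOn (left_mem_Icc.2 zero_le_one) (hfr x) (Int.fract_nonneg x)
  have hupp : ∀ x, φ x < (e ^ (⌊x⌋ + 1)) 0 := fun x => by
    rw [zpow_add_one, RelIso.mul_apply]
    refine (e ^ ⌊x⌋).strictMono ?_
    rw [← g1]
    exact hg (hfr x) (right_mem_Icc.2 zero_le_one) (Int.fract_lt_one x)
  have hmono : StrictMono φ := by
    intro x y hxy
    rcases (Int.floor_mono hxy.le).lt_or_eq with h | h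
    · exact (hupp x).trans_le
        (((zpow_zero_strictMono e he0).monotone (Int.add_one_le_iff.2 h)).trans (hlow y))
    · simp only [hφ]
      rw [← h]
      refine (e ^ ⌊x⌋).strictMono (hg (hfr x) (hfr y) ?_)
      rw [Int.fract, Int.fract, ← h]
      linarith
  have hsurj : Function.Surjective φ := by
    intro y
    obtain ⟨k, hk1, hk2⟩ := horb y
    have hz : (e ^ k) ((e ^ k)⁻¹ y) = y := RelIso.apply_inv_self _ _
    have z0 : 0 ≤ (e ^ k)⁻¹ y := by
      rw [← (e ^ k).le_iff_le, hz]; exact hk1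
    have z1 : (e ^ k)⁻¹ y < e 0 := by
      rw [← (e ^ k).lt_iff_lt, hz, ← RelIso.mul_apply, ← zpow_add_one]; exact hk2
    obtain ⟨x, hx, hgx⟩ := hs _ ⟨z0, z1.le⟩
    have hx1 : x < 1 := by
      refine lt_of_le_of_ne hx.2 ?_
      rintro rfl
      rw [g1] at hgx
      exact z1.ne' hgx
    have hfl : ⌊x⌋ = 0 := Int.floor_eq_zero_iff.2 ⟨hx.1, hx1⟩
    refine ⟨k + x, ?_⟩
    simp only [hφ]
    rw [Int.floor_intCast_add, Int.fract_intCast_add, hfl, add_zero,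
      Int.fract_eq_self.2 ⟨hx.1, hx1⟩, hgx, hz]
  refine ⟨hmono.orderIsoOfSurjective φ hsurj, fun x => ?_, fun x hx => ?_⟩
  · change φ (x + 1) = e (φ x)
    simp only [hφ]
    rw [Int.floor_add_one, Int.fract_add_one, add_comm, zpow_one_add, RelIso.mul_apply]
  · change φ x = g x
    simp only [hφ]
    rw [Int.floor_eq_zero_iff.2 hx, Int.fract_eq_self.2 hx]
    simp

end Orbit

lemma coe_pow_apply (e : ℝ ≃o ℝ) (n : ℕ) (x : ℝ) : (e ^ n) x = e^[n] x := by
  induction n with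
  | zero => rfl
  | succ n ih => rw [pow_succ', RelIso.mul_apply, ih, Function.iterate_succ_apply']

/-- If `F₁ 0` and `F₂ 0` are congruent modulo `(m - 1)·ℤ[1/m]`, a `PL` homeomorphism
`[0, F₁ 0] → [0, F₂ 0]` between fundamental domains extends to a `PL` conjugacy. -/
lemma exists_conj (hr : 0 < r) (hq : q ≠ 0) (h₁ : NLift m r q F₁) (h₂ : NLift m r q F₂)
    (p₁ : 0 < F₁ 0) (p₂ : 0 < F₂ 0) (hJ : F₁ 0 - F₂ 0 ∈ J m) :
    ∃ h : ℝ ≃o ℝ, (∀ x, h (F₁ x) = F₂ (h x)) ∧ (∀ x, h (x + r) = h x + r) ∧ PL m h 0 r := by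
  obtain ⟨g, hg, g0, ga⟩ := iso_of_sub_mem h₁.pl.map_left p₁ p₂ hJ
  obtain ⟨e₁, he₁⟩ : ∃ e : ℝ ≃o ℝ, ⇑e = F₁ :=
    ⟨h₁.mono.orderIsoOfSurjective F₁ (h₁.surjective hq), rfl⟩
  obtain ⟨e₂, he₂⟩ : ∃ e : ℝ ≃o ℝ, ⇑e = F₂ :=
    ⟨h₂.mono.orderIsoOfSurjective F₂ (h₂.surjective hq), rfl⟩
  subst he₁ he₂
  set a := e₁ 0 with ha
  have o₁ := exists_zpow_le_lt e₁ hr (fun x => by rw [coe_pow_apply, h₁.iter]) p₁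
  have o₂ := exists_zpow_le_lt e₂ hr (fun x => by rw [coe_pow_apply, h₂.iter]) p₂
  have hmem : ∀ x ∈ Icc (0 : ℝ) 1, a * x ∈ Icc 0 a := fun x hx =>
    ⟨mul_nonneg p₁.le hx.1, mul_le_of_le_one_right p₁.le hx.2⟩
  have hmem' : ∀ y ∈ Icc 0 a, y / a ∈ Icc (0 : ℝ) 1 := fun y hy =>
    ⟨div_nonneg hy.1 p₁.le, (div_le_one p₁).2 hy.2⟩
  obtain ⟨Φ₁, c₁, d₁⟩ := exists_extension e₁ p₁ o₁ (g := fun x => a * x)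
    (fun x _ y _ h => mul_lt_mul_of_pos_left h p₁)
    (fun y hy => ⟨y / a, hmem' y hy, mul_div_cancel₀ _ p₁.ne'⟩) (by simp) (by simp [ha])
  obtain ⟨Φ₂, c₂, d₂⟩ := exists_extension e₂ p₂ o₂ (g := fun x => g (a * x))
    (fun x hx y hy h => hg.strictMonoOn (hmem x hx) (hmem y hy) (mul_lt_mul_of_pos_left h p₁))
    (fun y hy => by
      obtain ⟨x, hx, rfl⟩ := hg.surj (y := y) (by rwa [g0, ga])
      exact ⟨x / a, hmem' x hx, by rw [mul_div_cancel₀ _ p₁.ne']⟩)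
    (by simp [g0]) (by simp [ga])
  set h : ℝ ≃o ℝ := Φ₁.symm.trans Φ₂ with hh
  have hΦ : ∀ x, h (Φ₁ x) = Φ₂ x := fun x => by simp [hh]
  have hc : Function.Semiconj h e₁ e₂ := by
    intro y
    obtain ⟨x, rfl⟩ := Φ₁.surjective y
    rw [← c₁, hΦ, hΦ, c₂]
  have hper : ∀ x, h (x + r) = h x + r := fun x => by
    rw [← h₁.iter, hc.iterate_right q, h₂.iter]
  have hlt : ∀ y, 0 ≤ y → y < a → h y = g y := fun y hy0 hya => by
    have hx : y / a ∈ Ico (0 : ℝ) 1 := ⟨div_nonneg hy0 p₁.le, (div_lt_one p₁).2 hya⟩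
    have e := hΦ (y / a)
    rwa [d₁ _ hx, d₂ _ hx, mul_div_cancel₀ _ p₁.ne'] at e
  have hpl0 : PL m h 0 a := by
    refine hg.congr fun y hy => ?_
    rcases hy.2.lt_or_eq with hlt' | rfl
    · exact (hlt y hy.1 hlt').symm
    · rw [ga, ha, hc, hlt 0 le_rfl p₁, g0]
  -- transport along the dynamics, using `h = F₂ ∘ h ∘ F₁⁻¹`
  have hstep : ∀ {x y : ℝ}, PL m h x y → PL m h (e₁ x) (e₁ y) := by
    intro x y hxy
    have i1 : PL m e₁ x y := h₁.pl.of_period hr h₁.per hxy.left hxy.right hxy.le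
    have i2 : PL m e₁.symm (e₁ x) (e₁ y) := i1.inv fun z _ => by simp
    have i3 : PL m e₂ (h x) (h y) :=
      h₂.pl.of_period hr h₂.per hxy.map_left hxy.map_right (h.monotone hxy.le)
    have i4 := i2.comp (G := e₂ ∘ h) (by simpa using hxy.comp i3)
    refine i4.congr fun z _ => ?_
    simp only [Function.comp]
    rw [← hc, OrderIso.apply_symm_apply]
  have hpiece : ∀ n : ℕ, PL m h (e₁^[n] 0) (e₁^[n + 1] 0) := by
    intro n
    induction n with
    | zero => exact hpl0
    | succ n ih =>
      rw [Function.iterate_succ_apply' _ n, Function.iterate_succ_apply' _ (n + 1)]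
      exact hstep ih
  have hall : ∀ n : ℕ, PL m h 0 (e₁^[n] 0) := by
    intro n
    induction n with
    | zero => exact PL.point (zero_mem _) hpl0.map_left
    | succ n ih => exact ih.trans (hpiece n)
  refine ⟨h, hc, hper, ?_⟩
  have := hall q
  rwa [h₁.iter, zero_add] at this

/-- The circle permutation induced by a periodic homeomorphism of the line. -/
lemma exists_perm (h : ℝ ≃o ℝ) (hper : ∀ x, h (x + r) = h x + r) :
    ∃ f : Equiv.Perm (AddCircle r), ∀ x : ℝ, f ↑x = ↑(h x) := by
  have hiff : ∀ x y : ℝ, (x : AddCircle r) = y ↔ (h x : AddCircle r) = h y := fun x y => by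
    rw [coe_eq_iff, coe_eq_iff]
    refine exists_congr fun k => ?_
    rw [← map_add_int_mul hper, h.injective.eq_iff]
  refine ⟨Quotient.congr h.toEquiv fun x y => ?_, fun x => rfl⟩
  exact Quotient.eq.symm.trans ((hiff x y).trans Quotient.eq)

end Conjugacy

end PLm

/-- `PL_m`-conjugacy criterion: for `f₁, f₂ ∈ T_{r,m}` of order `q` and rotation number
`1/q`, with `fᵢ(0) = Nᵢ/m^{sᵢ}`, the following are equivalent: (1) `f₁` and `f₂` are
conjugate in `T_{r,m}`; (2) `N₂ - N₁` is a multiple of `m-1`;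
(3) `f₁(0) - f₂(0) ∈ (m-1)·ℤ[1/m]`. -/
theorem plm_conjugacy_criterion (m r q : ℕ) (hm : 2 ≤ m) (hr : 1 ≤ r) (hq : 2 ≤ q)
    (f₁ f₂ : Equiv.Perm (AddCircle (r : ℝ))) (hf₁ : InT r m f₁) (hf₂ : InT r m f₂)
    (ho₁ : orderOf f₁ = q) (ho₂ : orderOf f₂ = q)
    (hrot₁ : HasRotNum r f₁ ((1 / (q : ℝ) : ℝ) : AddCircle (1 : ℝ)))
    (hrot₂ : HasRotNum r f₂ ((1 / (q : ℝ) : ℝ) : AddCircle (1 : ℝ)))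
    (N₁ s₁ N₂ s₂ : ℤ) (a₁ a₂ : ℝ)
    (ha₁ : a₁ = (N₁ : ℝ) / (m : ℝ) ^ s₁) (ha₂ : a₂ = (N₂ : ℝ) / (m : ℝ) ^ s₂)
    (ha₁0 : 0 < a₁) (ha₁r : a₁ < (r : ℝ)) (ha₂0 : 0 < a₂) (ha₂r : a₂ < (r : ℝ))
    (hv₁ : f₁ ((0 : ℝ) : AddCircle (r : ℝ)) = ((a₁ : ℝ) : AddCircle (r : ℝ)))
    (hv₂ : f₂ ((0 : ℝ) : AddCircle (r : ℝ)) = ((a₂ : ℝ) : AddCircle (r : ℝ))) :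
    (ConjInT r m f₁ f₂ ↔ ((m : ℤ) - 1) ∣ (N₂ - N₁)) ∧
    (((m : ℤ) - 1) ∣ (N₂ - N₁) ↔ ∃ z ∈ ZInvM m, a₁ - a₂ = ((m : ℝ) - 1) * z) := by
  have : NeZero m := ⟨by omega⟩
  have hr0 : (0 : ℝ) < r := by exact_mod_cast hr
  have hq0 : q ≠ 0 := by omega
  obtain ⟨F₁, n₁, l₁, v₁⟩ := PLm.exists_nlift hr hq hf₁ ho₁ hrot₁ ha₁0 ha₁r hv₁
  obtain ⟨F₂, n₂, l₂, v₂⟩ := PLm.exists_nlift hr hq hf₂ ho₂ hrot₂ ha₂0 ha₂r hv₂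
  have hconj : ConjInT r m f₁ f₂ ↔ a₁ - a₂ ∈ PLm.J m := by
    rw [← v₁, ← v₂]
    constructor
    · rintro ⟨h, ⟨H, ⟨hH, hHr, n, b, hb, hb0, hbr, hbz, hHz, haff⟩, hl⟩, hc⟩
      have hpl : PLm.PL m H 0 r := by
        have := PLm.PL.of_subdivision hb hbz hHz haff (Fin.last n)
        rwa [hb0, hbr] at this
      rw [mul_inv_eq_iff_eq_mul] at hc
      refine PLm.sub_mem_of_conj hr0 hq0 n₁ n₂ hH hHr hpl fun x => ?_
      have := congrArg (fun f : Equiv.Perm (AddCircle (r : ℝ)) => f x) hc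
      simpa only [Equiv.Perm.mul_apply, l₁, l₂, hl] using this
    · intro hJ
      obtain ⟨h, hc, hper, hpl⟩ :=
        PLm.exists_conj hr0 hq0 n₁ n₂ (v₁ ▸ ha₁0) (v₂ ▸ ha₂0) hJ
      obtain ⟨f, hf⟩ := PLm.exists_perm h hper
      refine ⟨f, ⟨h, hpl.isPLmLift h.strictMono hper, hf⟩, ?_⟩
      rw [mul_inv_eq_iff_eq_mul]
      ext y
      induction y using QuotientAddGroup.induction_on with
      | H x =>
        rw [Equiv.Perm.mul_apply, Equiv.Perm.mul_apply]
        erw [l₁, hf, hf, l₂, hc]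
  have hnum : ((m : ℤ) - 1) ∣ (N₂ - N₁) ↔ a₁ - a₂ ∈ PLm.J m := by
    -- since `m ^ s ≡ 1`, each `Nᵢ / m ^ sᵢ` is congruent to its numerator `Nᵢ`
    have hN : ∀ N s : ℤ, (N : ℝ) / (m : ℝ) ^ s - N ∈ PLm.J m := fun N s => by
      convert PLm.J_mul (PLm.zpow_sub_one_mem (m := m) (-s)) (intCast_mem _ N) using 1
      rw [zpow_neg]
      ring
    have hd := sub_mem (hN N₁ s₁) (hN N₂ s₂)
    rw [← ha₁, ← ha₂] at hd
    rw [← dvd_neg, ← PLm.intCast_mem_J, ← (PLm.J m).add_mem_cancel_left hd]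
    push_cast
    ring_nf
  exact ⟨hconj.trans hnum.symm, hnum⟩
end

section
/- Let m ≥ 2, r ≥ 1 and q ≥ 2 be integers. For any two integers p and p' each coprime to q, the number of conjugacy classes in T_{r,m} of elements of order q with rotation number p/q equals the number of conjugacy classes in T_{r,m} of elements of order q with rotation number p'/q. -/
/-!
Since `p` and `p'` are both units modulo `q`, there are positive integers `k, k'` with
`k p ≡ p'` and `k' p' ≡ p` modulo `q`, and then `k k' ≡ 1` modulo `q`. Taking `k`-th powers
multiplies rotation numbers by `k` (`HasRotNum.pow`), preserves the order `q`, and respects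
conjugacy; on elements of order `q` it is inverted by taking `k'`-th powers. So `f ↦ f ^ k`
induces a bijection between the two sets of conjugacy classes.

The point that needs an argument is that powers stay in `T_{r,m}` (`InT.pow`), i.e. that
`PL_m` lifts are closed under composition. For this the finite subdivision of `[0, r]` is traded
for a translation-free description (`IsGoodLift`): the lift preserves `ℤ[1/m]` in both directions
and is affine, with slope a power of `m`, on every interval whose interior avoids some locally
finite subset of `ℤ[1/m]`. If `S` and `T` are such sets for `F` and `G`, then `T ∪ G ⁻¹' S`
is one for `F ∘ G`.
-/

open Filter Topology

/-! ### The ring `ℤ[1/m]` -/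

section ZInvM

variable {m : ℕ}

theorem mem_ZInvM_iff (hm : 2 ≤ m) (x : ℝ) :
    x ∈ ZInvM m ↔ ∃ (n : ℕ) (N : ℤ), x * (m : ℝ) ^ n = N := by
  have hm0 : (m : ℝ) ≠ 0 := by positivity
  constructor
  · rintro ⟨N, s, rfl⟩
    obtain ⟨t, ht⟩ : ∃ t : ℕ, s + (s.natAbs : ℤ) = t :=
      ⟨(s + (s.natAbs : ℤ)).toNat, by omega⟩
    refine ⟨s.natAbs, N * (m : ℤ) ^ t, ?_⟩
    rw [mul_assoc, ← zpow_natCast, ← zpow_add₀ hm0, ht]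
    push_cast
    simp
  · rintro ⟨n, N, h⟩
    refine ⟨N, -(n : ℤ), ?_⟩
    rw [← h, mul_assoc, ← zpow_natCast, ← zpow_add₀ hm0]
    simp

theorem ZInvM_add (hm : 2 ≤ m) {x y : ℝ} (hx : x ∈ ZInvM m) (hy : y ∈ ZInvM m) :
    x + y ∈ ZInvM m := by
  rw [mem_ZInvM_iff hm] at *
  obtain ⟨n, N, h⟩ := hx
  obtain ⟨n', N', h'⟩ := hy
  refine ⟨n + n', N * (m : ℤ) ^ n' + N' * (m : ℤ) ^ n, ?_⟩
  push_cast
  rw [← h, ← h']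
  ring

theorem ZInvM_neg {x : ℝ} (hx : x ∈ ZInvM m) : -x ∈ ZInvM m := by
  obtain ⟨N, s, rfl⟩ := hx
  exact ⟨-N, s, by push_cast; ring⟩

theorem ZInvM_int (N : ℤ) : (N : ℝ) ∈ ZInvM m := ⟨N, 0, by simp⟩

theorem ZInvM_zpow_mul (hm : 2 ≤ m) {x : ℝ} (t : ℤ) (hx : x ∈ ZInvM m) :
    (m : ℝ) ^ t * x ∈ ZInvM m := by
  have hm0 : (m : ℝ) ≠ 0 := by positivity
  obtain ⟨N, s, rfl⟩ := hx
  exact ⟨N, t + s, by rw [zpow_add₀ hm0]; ring⟩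

theorem ZInvM_add_iff (hm : 2 ≤ m) {x y : ℝ} (hy : y ∈ ZInvM m) :
    x + y ∈ ZInvM m ↔ x ∈ ZInvM m :=
  ⟨fun h => by simpa using ZInvM_add hm h (ZInvM_neg hy), fun h => ZInvM_add hm h hy⟩

theorem ZInvM_zpow_mul_iff (hm : 2 ≤ m) {x : ℝ} (t : ℤ) :
    (m : ℝ) ^ t * x ∈ ZInvM m ↔ x ∈ ZInvM m := by
  have hm0 : (m : ℝ) ≠ 0 := by positivity
  refine ⟨fun h => ?_, ZInvM_zpow_mul hm t⟩
  have := ZInvM_zpow_mul hm (-t) h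
  rwa [← mul_assoc, ← zpow_add₀ hm0, neg_add_cancel, zpow_zero, one_mul] at this

end ZInvM

/-! ### Lifts described by locally finite breakpoint sets -/

/-- A description of `PL_m` lifts of homeomorphisms of `ℝ/rℤ` without reference to a fundamental
domain: the breakpoints lie in a locally finite set `S ⊆ ℤ[1/m]`, and `F` is affine with slope a
power of `m` on each interval whose interior misses `S`. Preservation of `ℤ[1/m]` in both
directions replaces the condition on the images of the breakpoints. -/
def IsGoodLift (m : ℕ) (r : ℝ) (F : ℝ → ℝ) : Prop :=
  StrictMono F ∧ (∀ x : ℝ, F (x + r) = F x + r) ∧ (∀ x, F x ∈ ZInvM m ↔ x ∈ ZInvM m) ∧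
    ∃ S : Set ℝ, S ⊆ ZInvM m ∧ (∀ c d : ℝ, (S ∩ Set.Icc c d).Finite) ∧
      ∀ x y : ℝ, x < y → Disjoint (Set.Ioo x y) S → ∃ (s : ℤ) (β : ℝ),
        ∀ z ∈ Set.Icc x y, F z = (m : ℝ) ^ s * z + β

theorem isGoodLift_id (m : ℕ) (r : ℝ) : IsGoodLift m r id :=
  ⟨strictMono_id, fun _ => rfl, fun _ => Iff.rfl, ∅, by simp, by simp,
    fun _ _ _ _ => ⟨0, 0, by simp⟩⟩

theorem IsGoodLift.comp {m : ℕ} {r : ℝ} (hm : 2 ≤ m) {F G : ℝ → ℝ} (hF : IsGoodLift m r F)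
    (hG : IsGoodLift m r G) : IsGoodLift m r (F ∘ G) := by
  have hm0 : (0 : ℝ) < m := by positivity
  obtain ⟨hF1, hF2, hF3, S, hS1, hS2, hS3⟩ := hF
  obtain ⟨hG1, hG2, hG3, T, hT1, hT2, hT3⟩ := hG
  refine ⟨hF1.comp hG1, fun x => by simp [hF2, hG2], fun x => (hF3 _).trans (hG3 _),
    T ∪ G ⁻¹' S, ?_, ?_, ?_⟩
  · rintro x (hx | hx)
    · exact hT1 hx
    · exact (hG3 x).1 (hS1 hx)
  · intro c d
    rw [Set.union_inter_distrib_right]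
    refine (hT2 c d).union (((hS2 (G c) (G d)).preimage hG1.injective.injOn).subset ?_)
    rintro x ⟨hx, hx1, hx2⟩
    exact ⟨hx, hG1.monotone hx1, hG1.monotone hx2⟩
  · intro x y hxy hd
    rw [Set.disjoint_union_right] at hd
    obtain ⟨s, β, h⟩ := hT3 x y hxy hd.1
    have hs : (0 : ℝ) < (m : ℝ) ^ s := zpow_pos hm0 s
    have hGx := h x ⟨le_rfl, hxy.le⟩
    have hGy := h y ⟨hxy.le, le_rfl⟩
    -- `G` maps `(x, y)` onto `(G x, G y)`, being affine there, so the latter avoids `S`.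
    have hd' : Disjoint (Set.Ioo (G x) (G y)) S := by
      rw [Set.disjoint_left]
      rintro z ⟨hz1, hz2⟩ hz
      have hw : (m : ℝ) ^ s * ((z - β) / (m : ℝ) ^ s) = z - β := by field_simp
      have hw1 : x < (z - β) / (m : ℝ) ^ s := by
        rw [lt_div_iff₀ hs]; linarith
      have hw2 : (z - β) / (m : ℝ) ^ s < y := by
        rw [div_lt_iff₀ hs]; linarith
      refine Set.disjoint_left.1 hd.2 ⟨hw1, hw2⟩ ?_
      rw [Set.mem_preimage, h _ ⟨hw1.le, hw2.le⟩, hw]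
      simpa using hz
    obtain ⟨t, γ, h'⟩ := hS3 (G x) (G y) (hG1 hxy) hd'
    refine ⟨t + s, (m : ℝ) ^ t * β + γ, fun z hz => ?_⟩
    rw [Function.comp_apply, h' _ ⟨hG1.monotone hz.1, hG1.monotone hz.2⟩, h z hz,
      zpow_add₀ hm0.ne']
    ring

theorem map_add_int_mul {r : ℝ} {F : ℝ → ℝ} (hF : ∀ x : ℝ, F (x + r) = F x + r) (k : ℤ) (x : ℝ) :
    F (x + k * r) = F x + k * r := by
  induction k using Int.induction_on generalizing x with
  | zero => simp
  | succ k ih =>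
    have := hF (x + k * r)
    push_cast at *
    rw [show x + (k + 1) * r = x + k * r + r by ring, this, ih]
    ring
  | pred k ih =>
    have := hF (x + (-(k : ℝ) - 1) * r)
    have h2 := ih x
    push_cast at *
    rw [show x + (-(k : ℝ) - 1) * r + r = x + -k * r by ring] at this
    linarith

theorem exists_piece {n : ℕ} {a : Fin (n + 1) → ℝ} {x : ℝ} (h0 : a 0 ≤ x)
    (h1 : x < a (Fin.last n)) : ∃ i : Fin n, a i.castSucc ≤ x ∧ x < a i.succ := by
  by_contra! hcon
  have : ∀ i : Fin (n + 1), a i ≤ x := by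
    intro i
    induction i using Fin.induction with
    | zero => exact h0
    | succ i ih => exact hcon i ih
  exact absurd (this (Fin.last n)) (not_le.2 h1)

/-- The locally finite set consists of all translates by `rℤ` of the given breakpoints. -/
theorem IsPLmLift.isGoodLift {m : ℕ} {r : ℕ} (hm : 2 ≤ m) (hr : 1 ≤ r) {F : ℝ → ℝ}
    (hF : IsPLmLift m r r F) : IsGoodLift m r F := by
  have hr0 : (0 : ℝ) < r := by positivity
  obtain ⟨hF1, hF2, n, a, ha, ha0, har, haZ, hFZ, haff⟩ := hF
  have hkr (k : ℤ) : (k : ℝ) * r ∈ ZInvM m := by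
    have := ZInvM_int (m := m) (k * r)
    push_cast at this
    exact this
  -- Every real number lies in a translate of one of the pieces.
  have hpiece (x : ℝ) : ∃ (k : ℤ) (i : Fin n),
      a i.castSucc + k * r ≤ x ∧ x < a i.succ + k * r := by
    obtain ⟨k, ⟨hk1, hk2⟩, -⟩ := existsUnique_add_zsmul_mem_Ico hr0 x 0
    rw [zsmul_eq_mul] at hk1 hk2
    obtain ⟨i, hi1, hi2⟩ := exists_piece (a := a) (x := x + k * r) (by rw [ha0]; exact hk1)
      (by rw [har]; linarith)
    exact ⟨-k, i, by push_cast; linarith, by push_cast; linarith⟩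
  have htrans (k : ℤ) (i : Fin n) : ∃ (s : ℤ) (β : ℝ), β ∈ ZInvM m ∧
      ∀ z, a i.castSucc + k * r ≤ z → z ≤ a i.succ + k * r → F z = (m : ℝ) ^ s * z + β := by
    obtain ⟨s, β, h⟩ := haff i
    have hβ : β ∈ ZInvM m := by
      have h1 := hFZ i.castSucc
      rw [h _ ⟨le_rfl, (ha i.castSucc_lt_succ).le⟩, add_comm,
        ZInvM_add_iff hm (ZInvM_zpow_mul hm s (haZ _))] at h1
      exact h1
    refine ⟨s, (β + k * r) + -((m : ℝ) ^ s * (k * r)), ZInvM_add hm (ZInvM_add hm hβ (hkr k))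
      (ZInvM_neg (ZInvM_zpow_mul hm s (hkr k))), fun z h1 h2 => ?_⟩
    have h3 := map_add_int_mul hF2 k (z - k * r)
    rw [sub_add_cancel] at h3
    rw [h3, h _ ⟨by linarith, by linarith⟩]
    ring
  refine ⟨hF1, hF2, fun x => ?_, {x | ∃ (k : ℤ) (i : Fin (n + 1)), x = a i + k * r}, ?_, ?_, ?_⟩
  · obtain ⟨k, i, h1, h2⟩ := hpiece x
    obtain ⟨s, β, hβ, h⟩ := htrans k i
    rw [h x h1 h2.le, ZInvM_add_iff hm hβ, ZInvM_zpow_mul_iff hm]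
  · rintro x ⟨k, i, rfl⟩
    exact ZInvM_add hm (haZ i) (hkr k)
  · intro c d
    refine ((Set.finite_Icc (⌊c / r⌋ - 1) ⌈d / r⌉ : Set.Finite _).prod
      (Set.finite_univ (α := Fin (n + 1)))).image (fun x => a x.2 + x.1 * r) |>.subset ?_
    rintro x ⟨⟨k, i, rfl⟩, h1, h2⟩
    have hi0 : 0 ≤ a i := by rw [← ha0]; exact ha.monotone (Fin.zero_le i)
    have hir : a i ≤ r := by rw [← har]; exact ha.monotone (Fin.le_last i)
    refine ⟨(k, i), ⟨⟨?_, ?_⟩, trivial⟩, rfl⟩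
    · have : c / r ≤ k + 1 := by rw [div_le_iff₀ hr0]; linarith
      have h3 := (Int.floor_le _).trans this
      have h4 : ⌊c / r⌋ ≤ k + 1 := by exact_mod_cast h3
      show ⌊c / r⌋ - 1 ≤ k
      omega
    · have : (k : ℝ) ≤ d / r := by rw [le_div_iff₀ hr0]; linarith
      have h3 := this.trans (Int.le_ceil _)
      exact_mod_cast h3
  · intro x y hxy hd
    obtain ⟨k, i, h1, h2⟩ := hpiece x
    obtain ⟨s, β, hβ, h⟩ := htrans k i
    have hy : y ≤ a i.succ + k * r := by
      by_contra! hlt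
      exact Set.disjoint_left.1 hd ⟨h2, hlt⟩ ⟨k, i.succ, rfl⟩
    exact ⟨s, β, fun z hz => h z (h1.trans hz.1) (hz.2.trans hy)⟩

/-- The subdivision consists of `0`, `r` and the points of `S` in `[0, r]`, in increasing
order. -/
theorem IsGoodLift.isPLmLift {m : ℕ} {r : ℕ} (hr : 1 ≤ r) {F : ℝ → ℝ}
    (hF : IsGoodLift m r F) : IsPLmLift m r r F := by
  have hr0 : (0 : ℝ) < r := by positivity
  obtain ⟨hF1, hF2, hF3, S, hS1, hS2, hS3⟩ := hF
  set T : Finset ℝ := insert 0 (insert (r : ℝ) (hS2 0 r).toFinset) with hT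
  have hmem (x : ℝ) : x ∈ T ↔ x = 0 ∨ x = r ∨ (x ∈ S ∧ 0 ≤ x ∧ x ≤ r) := by simp [hT]
  have hTI (x : ℝ) (hx : x ∈ T) : 0 ≤ x ∧ x ≤ r := by
    rcases (hmem x).1 hx with rfl | rfl | h
    · exact ⟨le_rfl, hr0.le⟩
    · exact ⟨hr0.le, le_rfl⟩
    · exact h.2
  have h0T : (0 : ℝ) ∈ T := (hmem _).2 (Or.inl rfl)
  have hrT : (r : ℝ) ∈ T := (hmem _).2 (Or.inr (Or.inl rfl))
  have hTZ (x : ℝ) (hx : x ∈ T) : x ∈ ZInvM m := by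
    rcases (hmem x).1 hx with rfl | rfl | h
    · exact_mod_cast ZInvM_int (m := m) 0
    · exact_mod_cast ZInvM_int (m := m) r
    · exact hS1 h.1
  obtain ⟨n, hn⟩ : ∃ n, T.card = n + 1 :=
    Nat.exists_eq_succ_of_ne_zero (Finset.card_ne_zero_of_mem h0T)
  set a := T.orderEmbOfFin hn with ha
  have haT (i) : a i ∈ T := T.orderEmbOfFin_mem hn i
  have hTa (x) (hx : x ∈ T) : ∃ i, a i = x := by
    have : x ∈ Set.range a := by rw [ha, Finset.range_orderEmbOfFin]; exact hx
    exact this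
  refine ⟨hF1, hF2, n, a, a.strictMono, ?_, ?_, fun i => hTZ _ (haT i),
    fun i => (hF3 _).2 (hTZ _ (haT i)), fun i => ?_⟩
  · obtain ⟨i, hi⟩ := hTa 0 h0T
    exact le_antisymm (hi ▸ a.monotone (Fin.zero_le i)) (hTI _ (haT 0)).1
  · obtain ⟨i, hi⟩ := hTa r hrT
    exact le_antisymm (hTI _ (haT _)).2 (hi ▸ a.monotone (Fin.le_last i))
  · refine hS3 _ _ (a.strictMono i.castSucc_lt_succ) (Set.disjoint_left.2 ?_)
    rintro x ⟨hx1, hx2⟩ hxS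
    -- A point of `S` strictly between two consecutive elements of `T` would itself be in `T`.
    obtain ⟨j, rfl⟩ := hTa x ((hmem x).2 (Or.inr (Or.inr ⟨hxS,
      (hTI _ (haT _)).1.trans hx1.le, hx2.le.trans (hTI _ (haT _)).2⟩)))
    have h1 := a.lt_iff_lt.1 hx1
    have h2 := a.lt_iff_lt.1 hx2
    rw [Fin.lt_def] at h1 h2
    simp at h1 h2
    omega

/-! ### Powers, conjugacy and rotation numbers -/

theorem InT.pow {r m : ℕ} (hm : 2 ≤ m) (hr : 1 ≤ r) {f : Equiv.Perm (AddCircle (r : ℝ))}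
    (hf : InT r m f) (k : ℕ) : InT r m (f ^ k) := by
  obtain ⟨F, hF, hfF⟩ := hf
  have hG := hF.isGoodLift hm hr
  have key : IsGoodLift m r F^[k] ∧ ∀ x : ℝ, (f ^ k) ↑x = ↑(F^[k] x) := by
    induction k with
    | zero => exact ⟨isGoodLift_id m r, fun x => rfl⟩
    | succ k ih =>
      refine ⟨?_, fun x => ?_⟩
      · rw [Function.iterate_succ']
        exact hG.comp hm ih.1
      · rw [pow_succ', Equiv.Perm.mul_apply, ih.2, hfF, Function.iterate_succ_apply']
  exact ⟨F^[k], key.1.isPLmLift hr, key.2⟩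

theorem ConjInT.pow {r m : ℕ} {f g : Equiv.Perm (AddCircle (r : ℝ))} (h : ConjInT r m f g)
    (k : ℕ) : ConjInT r m (f ^ k) (g ^ k) := by
  obtain ⟨h, hh, rfl⟩ := h
  exact ⟨h, hh, conj_pow.symm⟩

theorem HasRotNum.pow {r : ℝ} {f : Equiv.Perm (AddCircle r)} {ρ : AddCircle (1 : ℝ)}
    (h : HasRotNum r f ρ) {k : ℕ} (hk : 0 < k) : HasRotNum r (f ^ k) (k • ρ) := by
  obtain ⟨F, hF1, hF2, hF3, L, hL, rfl⟩ := h
  refine ⟨F^[k], hF1.iterate k, fun x => ?_, fun x => ?_, k * L, ?_, ?_⟩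
  · have hcomm : Function.Commute F (· + r) := hF2
    exact hcomm.iterate_left k x
  · clear hk
    induction k with
    | zero => rfl
    | succ k ih => rw [pow_succ', Equiv.Perm.mul_apply, ih, hF3, Function.iterate_succ_apply']
  · have h1 : Tendsto (fun n : ℕ => k * n) atTop atTop := tendsto_id.const_mul_atTop' hk
    refine ((hL.comp h1).const_mul (k : ℝ)).congr fun n => ?_
    have hk0 : (k : ℝ) ≠ 0 := by positivity
    simp only [Function.comp_apply, ← Function.iterate_mul]
    push_cast
    rw [show r * (k * (n : ℝ)) = k * (r * n) by ring, ← mul_div_assoc, mul_div_mul_left _ _ hk0]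
  · rw [← nsmul_eq_mul]
    rfl

theorem nsmul_rot_eq {q k : ℕ} (hq : 2 ≤ q) {p p' : ℤ} (h : k * p ≡ p' [ZMOD q]) :
    k • (((p : ℝ) / (q : ℝ) : ℝ) : AddCircle (1 : ℝ)) =
      (((p' : ℝ) / (q : ℝ) : ℝ) : AddCircle (1 : ℝ)) := by
  have hq0 : (q : ℝ) ≠ 0 := by positivity
  obtain ⟨t, ht⟩ := h.dvd
  rw [← AddCircle.coe_nsmul, eq_comm, ← sub_eq_zero, ← AddCircle.coe_sub,
    AddCircle.coe_eq_zero_iff]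
  refine ⟨t, ?_⟩
  have ht' : (p' : ℝ) - k * p = q * t := by exact_mod_cast ht
  simp only [zsmul_eq_mul, nsmul_eq_mul]
  field_simp
  linarith

theorem exists_mul_modEq {q : ℕ} (hq : 2 ≤ q) {p : ℤ} (hp : Int.gcd p q = 1) (p' : ℤ) :
    ∃ k : ℕ, 0 < k ∧ k * p ≡ p' [ZMOD q] := by
  obtain ⟨a, b, hab⟩ := Int.isCoprime_iff_gcd_eq_one.2 hp
  have h0 : 0 ≤ (p' * a) % q := Int.emod_nonneg _ (by omega)
  refine ⟨((p' * a) % q).toNat + q, by omega, ?_⟩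
  push_cast
  rw [Int.toNat_of_nonneg h0]
  have h1 : (p' * a) % q + q ≡ p' * a [ZMOD q] := by simp [Int.ModEq]
  refine (h1.mul_right p).trans (Int.modEq_iff_dvd.2 ⟨p' * b, ?_⟩)
  linear_combination -p' * hab

/-- Powers with exponent `k` such that `k p ≡ p'` carry elements of order `q` and rotation number
`p/q` to elements of order `q` and rotation number `p'/q`. -/
theorem rotNum_pow_mem {m r q : ℕ} (hm : 2 ≤ m) (hr : 1 ≤ r) (hq : 2 ≤ q) {p p' : ℤ} {k : ℕ}
    (hk : 0 < k) (hkq : Nat.Coprime q k) (hkp : k * p ≡ p' [ZMOD q])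
    {f : Equiv.Perm (AddCircle (r : ℝ))}
    (hf : InT r m f ∧ orderOf f = q ∧
      HasRotNum r f (((p : ℝ) / (q : ℝ) : ℝ) : AddCircle (1 : ℝ))) :
    InT r m (f ^ k) ∧ orderOf (f ^ k) = q ∧
      HasRotNum r (f ^ k) (((p' : ℝ) / (q : ℝ) : ℝ) : AddCircle (1 : ℝ)) := by
  refine ⟨hf.1.pow hm hr k, ?_, ?_⟩
  · rw [Nat.Coprime.orderOf_pow (by rwa [hf.2.1]), hf.2.1]
  · rw [← nsmul_rot_eq hq hkp]
    exact hf.2.2.pow hk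

/-- The number of conjugacy classes in `T_{r,m}` of elements of order `q` with rotation
number `p/q` does not depend on the choice of `p` coprime to `q`. -/
theorem card_conj_classes_indep_of_p (m r q : ℕ) (hm : 2 ≤ m) (hr : 1 ≤ r) (hq : 2 ≤ q)
    (p p' : ℤ) (hp : Int.gcd p q = 1) (hp' : Int.gcd p' q = 1) :
    Nat.card (Quot (fun f g : {f : Equiv.Perm (AddCircle (r : ℝ)) //
        InT r m f ∧ orderOf f = q ∧
          HasRotNum r f (((p : ℝ) / (q : ℝ) : ℝ) : AddCircle (1 : ℝ))} =>
      ConjInT r m f.1 g.1)) =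
    Nat.card (Quot (fun f g : {f : Equiv.Perm (AddCircle (r : ℝ)) //
        InT r m f ∧ orderOf f = q ∧
          HasRotNum r f (((p' : ℝ) / (q : ℝ) : ℝ) : AddCircle (1 : ℝ))} =>
      ConjInT r m f.1 g.1)) := by
  obtain ⟨k, hk, hkp⟩ := exists_mul_modEq hq hp p'
  obtain ⟨k', hk', hkp'⟩ := exists_mul_modEq hq hp' p
  -- `k k' p ≡ p`, and `p` can be cancelled.
  have hkk : k * k' ≡ 1 [MOD q] := by
    have h1 : p * (k * k' : ℤ) ≡ p * 1 [ZMOD q] := by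
      have := (hkp.mul_left k').trans hkp'
      rwa [show (k' : ℤ) * (k * p) = p * (k * k') by ring, ← mul_one p, mul_assoc, one_mul] at this
    have h2 := Int.ModEq.cancel_left_div_gcd (by omega) h1
    rw [Int.gcd_comm, hp] at h2
    rw [← Int.natCast_modEq_iff]
    simpa using h2
  have hcop : Nat.Coprime q (k * k') := by
    rw [Nat.coprime_comm, Nat.Coprime, hkk.gcd_eq, Nat.gcd_one_left]
  have hpow {f : Equiv.Perm (AddCircle (r : ℝ))} (hf : orderOf f = q) : (f ^ k) ^ k' = f := by
    rw [← pow_mul]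
    conv_rhs => rw [← pow_one f]
    rw [pow_eq_pow_iff_modEq, hf]
    exact hkk
  have hpow' {f : Equiv.Perm (AddCircle (r : ℝ))} (hf : orderOf f = q) : (f ^ k') ^ k = f := by
    rw [← pow_mul, mul_comm, pow_mul, hpow hf]
  refine Nat.card_congr (Quot.congr
    { toFun := fun f => ⟨f.1 ^ k, rotNum_pow_mem hm hr hq hk hcop.coprime_mul_right_right hkp f.2⟩
      invFun := fun f => ⟨f.1 ^ k', rotNum_pow_mem hm hr hq hk' hcop.coprime_mul_left_right hkp' f.2⟩
      left_inv := fun f => Subtype.ext (hpow f.2.2.1)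
      right_inv := fun f => Subtype.ext (hpow' f.2.2.1) } fun f g => ⟨fun h => h.pow k, fun h => ?_⟩)
  have := ConjInT.pow h k'
  simpa only [Equiv.coe_fn_mk, hpow f.2.2.1, hpow g.2.2.1] using this
end

section
/- Every orientation-preserving piecewise affine homeomorphism f of the circle S^1 = ℝ/ℤ of finite order q ≥ 2 has rotation number of the form p/q with 0 < p < q and gcd(p, q) = 1, and f is conjugate within the group PL^+(S^1) of orientation-preserving piecewise affine homeomorphisms of S^1 to the rotation x ↦ x + p/q (mod 1). -/
/-!
Let `F` be a piecewise affine lift of `f`. Since `f ^ q = 1`, every value `F^[q] x - x` is an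
integer, and it equals the translation number of `F^[q]`, hence is a constant `P`. The average
`H = (F^[0] + ... + F^[q-1]) / q` then satisfies `H (F x) = H x + P / q`, because the sum telescopes.
As `H` is again a piecewise affine lift of degree one, it descends to `h ∈ PL⁺(S¹)` conjugating
`f` to the rotation by `P / q`, which is the translation number of `F`. Take `p = P mod q`; with
`d = gcd p q`, the rotation by `p / q` has trivial `q / d`-th power, so `q ∣ q / d` and `d = 1`.

Closure of piecewise affine maps under composition and sums is immediate for the local
description `LocPL` (affine on a one-sided neighbourhood of each point). The equivalence with the
existence of a finite subdivision is a continuous induction (`reflTransGen_affine`).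
-/

open Filter Topology

/-- `F : ℝ → ℝ` is a lift of an orientation-preserving piecewise affine homeomorphism
from the circle `ℝ/rℤ` to the circle `ℝ/r'ℤ`: it is strictly increasing, commutes
appropriately with the translations, and is affine on the pieces of a finite
subdivision `0 = a₀ < a₁ < ... < aₙ = r` of `[0, r]`. -/
def IsPLLift (r r' : ℝ) (F : ℝ → ℝ) : Prop :=
  StrictMono F ∧ (∀ x : ℝ, F (x + r) = F x + r') ∧
    ∃ (n : ℕ) (a : Fin (n + 1) → ℝ),
      StrictMono a ∧ a 0 = 0 ∧ a (Fin.last n) = r ∧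
      ∀ i : Fin n, ∃ (lam β : ℝ),
        ∀ x ∈ Set.Icc (a i.castSucc) (a i.succ), F x = lam * x + β

/-- Membership in the group `PL⁺(S¹)` of orientation-preserving piecewise affine
homeomorphisms of the circle `S¹ = ℝ/ℤ`, viewed inside the permutations of `ℝ/ℤ`. -/
def InPL (f : Equiv.Perm (AddCircle (1 : ℝ))) : Prop :=
  ∃ F : ℝ → ℝ, IsPLLift 1 1 F ∧ ∀ x : ℝ, f ↑x = ↑(F x)

/-! ### Locally piecewise affine maps -/

/-- Local form of piecewise affinity: `F` is affine on some one-sided neighbourhood of every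
point, on either side. The point itself belongs to both neighbourhoods, so `F` is continuous. -/
def LocPL (F : ℝ → ℝ) : Prop :=
  ∀ x, (∃ l b : ℝ, ∀ᶠ y in 𝓝[≥] x, F y = l * y + b) ∧
    (∃ l b : ℝ, ∀ᶠ y in 𝓝[≤] x, F y = l * y + b)

/-- `[s, t]` is a nondegenerate interval on which `F` is affine. -/
def AffineOn (F : ℝ → ℝ) (s t : ℝ) : Prop :=
  s < t ∧ ∃ l b : ℝ, ∀ x ∈ Set.Icc s t, F x = l * x + b

lemma LocPL.continuous {F : ℝ → ℝ} (hF : LocPL F) : Continuous F := by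
  rw [continuous_iff_continuousAt]
  intro x
  have key : ∀ s : Set ℝ, x ∈ s → (∃ l b : ℝ, ∀ᶠ y in 𝓝[s] x, F y = l * y + b) →
      ContinuousWithinAt F s x := by
    rintro s hx ⟨l, b, h⟩
    have hc : ContinuousWithinAt (fun y => l * y + b) s x := by fun_prop
    exact hc.congr_of_eventuallyEq h (h.self_of_nhdsWithin hx)
  rw [continuousAt_iff_continuous_left_right]
  exact ⟨key _ Set.self_mem_Iic (hF x).2, key _ Set.self_mem_Ici (hF x).1⟩

lemma LocPL.id : LocPL (fun x => x) := fun _ =>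
  ⟨⟨1, 0, by simp⟩, ⟨1, 0, by simp⟩⟩

lemma LocPL.add {F G : ℝ → ℝ} (hF : LocPL F) (hG : LocPL G) : LocPL (fun x => F x + G x) := by
  intro x
  obtain ⟨⟨l, b, h⟩, ⟨l', b', h'⟩⟩ := hF x
  obtain ⟨⟨m, c, k⟩, ⟨m', c', k'⟩⟩ := hG x
  refine ⟨⟨l + m, b + c, ?_⟩, ⟨l' + m', b' + c', ?_⟩⟩
  · filter_upwards [h, k] with y h1 h2
    rw [h1, h2]; ring
  · filter_upwards [h', k'] with y h1 h2
    rw [h1, h2]; ring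

lemma LocPL.comp {F G : ℝ → ℝ} (hF : LocPL F) (hG : LocPL G) (hm : Monotone G) :
    LocPL (fun x => F (G x)) := by
  intro x
  have hc := hG.continuous
  obtain ⟨⟨l, b, h⟩, ⟨l', b', h'⟩⟩ := hF (G x)
  obtain ⟨⟨m, c, k⟩, ⟨m', c', k'⟩⟩ := hG x
  have t1 : Tendsto G (𝓝[≥] x) (𝓝[≥] (G x)) :=
    hc.continuousWithinAt.tendsto_nhdsWithin fun y hy => hm hy
  have t2 : Tendsto G (𝓝[≤] x) (𝓝[≤] (G x)) :=
    hc.continuousWithinAt.tendsto_nhdsWithin fun y hy => hm hy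
  refine ⟨⟨l * m, l * c + b, ?_⟩, ⟨l' * m', l' * c' + b', ?_⟩⟩
  · filter_upwards [t1.eventually h, k] with y h1 h2
    rw [h1, h2]; ring
  · filter_upwards [t2.eventually h', k'] with y h1 h2
    rw [h1, h2]; ring

lemma LocPL.const_mul {F : ℝ → ℝ} (hF : LocPL F) (c : ℝ) : LocPL (fun x => c * F x) := by
  intro x
  obtain ⟨⟨l, b, h⟩, ⟨l', b', h'⟩⟩ := hF x
  refine ⟨⟨c * l, c * b, ?_⟩, ⟨c * l', c * b', ?_⟩⟩
  · filter_upwards [h] with y h1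
    rw [h1]; ring
  · filter_upwards [h'] with y h1
    rw [h1]; ring

lemma LocPL.iterate {F : ℝ → ℝ} (hF : LocPL F) (hm : Monotone F) :
    ∀ n : ℕ, LocPL (fun x => F^[n] x)
  | 0 => LocPL.id
  | n + 1 => (hF.iterate hm n).comp hF hm

lemma LocPL.sum {F : ℕ → ℝ → ℝ} (hF : ∀ n, LocPL (F n)) :
    ∀ n : ℕ, LocPL (fun x => ∑ i ∈ Finset.range n, F i x)
  | 0 => fun _ => ⟨⟨0, 0, by simp⟩, ⟨0, 0, by simp⟩⟩
  | n + 1 => by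
    simp only [Finset.sum_range_succ]
    exact (LocPL.sum hF n).add (hF n)

/-! ### From a finite subdivision to the local description -/

/-- Some piece of a finite subdivision contains a right neighbourhood of `x`. -/
lemma exists_piece_right {n : ℕ} (a : Fin (n + 1) → ℝ) {x : ℝ} (h0 : a 0 ≤ x)
    (h1 : x < a (Fin.last n)) : ∃ i : Fin n, a i.castSucc ≤ x ∧ x < a i.succ := by
  by_contra! hcon
  have : ∀ j : Fin (n + 1), a j ≤ x := Fin.induction h0 hcon
  exact absurd (this (Fin.last n)) (not_le.2 h1)

/-- Some piece of a finite subdivision contains a left neighbourhood of `x`. -/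
lemma exists_piece_left {n : ℕ} (a : Fin (n + 1) → ℝ) {x : ℝ} (h0 : a 0 < x)
    (h1 : x ≤ a (Fin.last n)) : ∃ i : Fin n, a i.castSucc < x ∧ x ≤ a i.succ := by
  by_contra! hcon
  have : ∀ j : Fin (n + 1), a j < x := Fin.induction h0 hcon
  exact absurd (this (Fin.last n)) (not_lt.2 h1)

lemma map_add_intCast {F : ℝ → ℝ} (h : ∀ x, F (x + 1) = F x + 1) (x : ℝ) (m : ℤ) :
    F (x + m) = F x + m := by
  induction m using Int.induction_on with
  | zero => simp
  | succ i ih => push_cast at ih ⊢; rw [← add_assoc, h, ih]; ring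
  | pred i ih =>
    have := h (x + ((-(i : ℤ) - 1 : ℤ) : ℝ))
    push_cast at ih this ⊢
    rw [show x + (-(i : ℝ) - 1) + 1 = x + -i by ring, ih] at this
    linarith

/-- Integer translates of the pieces in `[0, 1]` give one-sided affine neighbourhoods everywhere. -/
lemma IsPLLift.locPL {F : ℝ → ℝ} (hF : IsPLLift 1 1 F) : LocPL F := by
  obtain ⟨-, hp, n, a, -, h0, h1, haff⟩ := hF
  intro x
  constructor
  · obtain ⟨i, hi1, hi2⟩ := exists_piece_right a (x := x - ⌊x⌋)
      (by rw [h0]; linarith [Int.floor_le x]) (by rw [h1]; linarith [Int.lt_floor_add_one x])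
    obtain ⟨l, b, h⟩ := haff i
    refine ⟨l, b - l * ⌊x⌋ + ⌊x⌋, ?_⟩
    have : x < a i.succ + ⌊x⌋ := by linarith
    filter_upwards [Icc_mem_nhdsGE this] with y hy
    have e := map_add_intCast hp (y - ⌊x⌋) ⌊x⌋
    rw [sub_add_cancel, h (y - ⌊x⌋) ⟨by linarith [hy.1], by linarith [hy.2]⟩] at e
    rw [e]; ring
  · -- `⌈x⌉ - 1` translates `x` into `(0, 1]`.
    obtain ⟨i, hi1, hi2⟩ := exists_piece_left a (x := x - (⌈x⌉ - 1 : ℤ))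
      (by rw [h0]; push_cast; linarith [Int.ceil_lt_add_one x])
      (by rw [h1]; push_cast; linarith [Int.le_ceil x])
    obtain ⟨l, b, h⟩ := haff i
    set k : ℤ := ⌈x⌉ - 1
    refine ⟨l, b - l * k + k, ?_⟩
    have : a i.castSucc + k < x := by linarith
    filter_upwards [Icc_mem_nhdsLE this] with y hy
    have e := map_add_intCast hp (y - k) k
    rw [sub_add_cancel, h (y - k) ⟨by linarith [hy.1], by linarith [hy.2]⟩] at e
    rw [e]; ring

/-! ### From the local description to a finite subdivision -/

/-- Continuous induction: the supremum `c` of the points reachable from `s` through finitely many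
affine pieces is itself reachable (left germ at `c`) and cannot be smaller than `t`
(right germ at `c`). -/
lemma reflTransGen_affine {F : ℝ → ℝ} (hF : LocPL F) {s t : ℝ} (hst : s ≤ t) :
    Relation.ReflTransGen (AffineOn F) s t := by
  set S : Set ℝ := {c | c ≤ t ∧ Relation.ReflTransGen (AffineOn F) s c} with hS
  have hsS : s ∈ S := ⟨hst, .refl⟩
  have hbdd : BddAbove S := ⟨t, fun c hc => hc.1⟩
  set c := sSup S with hc
  have hct : c ≤ t := csSup_le ⟨s, hsS⟩ fun y hy => hy.1
  have hcS : Relation.ReflTransGen (AffineOn F) s c := by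
    obtain ⟨l, b, h⟩ := (hF c).2
    obtain ⟨u, hu, hsub⟩ := (mem_nhdsLE_iff_exists_Icc_subset (a := c)).1 h
    obtain ⟨v, hv, huv⟩ := exists_lt_of_lt_csSup ⟨s, hsS⟩ hu
    rcases (le_csSup hbdd hv).eq_or_lt with e | hlt
    · exact hc ▸ e ▸ hv.2
    · exact hv.2.tail ⟨hlt, l, b, fun y hy => hsub ⟨huv.le.trans hy.1, hy.2⟩⟩
  rcases hct.eq_or_lt with e | hlt
  · exact e ▸ hcS
  · exfalso
    obtain ⟨l, b, h⟩ := (hF c).1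
    obtain ⟨u, hu, hsub⟩ := (mem_nhdsGE_iff_exists_Icc_subset (a := c)).1 h
    have hcu : c < min u t := lt_min hu hlt
    have : min u t ∈ S := ⟨min_le_right _ _, hcS.tail
      ⟨hcu, l, b, fun y hy => hsub ⟨hy.1, hy.2.trans (min_le_left _ _)⟩⟩⟩
    exact absurd (le_csSup hbdd this) (not_le.2 hcu)

lemma exists_subdivision {F : ℝ → ℝ} {s t : ℝ} (h : Relation.ReflTransGen (AffineOn F) s t) :
    ∃ (n : ℕ) (a : Fin (n + 1) → ℝ),
      StrictMono a ∧ a 0 = s ∧ a (Fin.last n) = t ∧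
      ∀ i : Fin n, ∃ (lam β : ℝ),
        ∀ x ∈ Set.Icc (a i.castSucc) (a i.succ), F x = lam * x + β := by
  induction h with
  | refl => exact ⟨0, fun _ => s, Fin.strictMono_iff_lt_succ.2 fun i => i.elim0, rfl, rfl, fun i => i.elim0⟩
  | @tail u v _ huv ih =>
    obtain ⟨n, a, hm, h0, h1, haff⟩ := ih
    refine ⟨n + 1, Fin.snoc a v, ?_, ?_, by simp, ?_⟩
    · rw [Fin.strictMono_iff_lt_succ]
      intro i
      refine Fin.lastCases ?_ (fun j => ?_) i
      · rw [Fin.succ_last]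
        simpa [h1] using huv.1
      · simpa only [Fin.succ_castSucc, Fin.snoc_castSucc] using hm (Fin.castSucc_lt_succ (i := j))
    · rw [← Fin.castSucc_zero, Fin.snoc_castSucc, h0]
    · intro i
      refine Fin.lastCases ?_ (fun j => ?_) i
      · rw [Fin.succ_last]
        simpa [h1] using huv.2
      · simpa only [Fin.succ_castSucc, Fin.snoc_castSucc] using haff j

lemma LocPL.isPLLift {F : ℝ → ℝ} (hF : LocPL F) (hm : StrictMono F)
    (hp : ∀ x, F (x + 1) = F x + 1) : IsPLLift 1 1 F :=
  ⟨hm, hp, exists_subdivision (reflTransGen_affine hF zero_le_one)⟩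

/-! ### Lifts and circle homeomorphisms -/

lemma coe_eq_coe_iff_int {x y : ℝ} :
    (x : AddCircle (1 : ℝ)) = y ↔ ∃ n : ℤ, x = y + n := by
  rw [← sub_eq_zero, ← AddCircle.coe_sub, AddCircle.coe_eq_zero_iff]
  simp only [zsmul_eq_mul, mul_one]
  exact exists_congr fun n => ⟨fun h => by linarith, fun h => by linarith⟩

/-- A piecewise affine lift of degree one descends to an element of `PL⁺(S¹)`. -/
lemma IsPLLift.exists_perm {H : ℝ → ℝ} (hH : IsPLLift 1 1 H) :
    ∃ h : Equiv.Perm (AddCircle (1 : ℝ)), InPL h ∧ ∀ x : ℝ, h ↑x = ↑(H x) := by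
  have hm := hH.1
  have hp := hH.2.1
  have hsurj : Function.Surjective H :=
    (CircleDeg1Lift.continuous_iff_surjective ⟨⟨H, hm.monotone⟩, hp⟩).1 hH.locPL.continuous
  have hper : Function.Periodic (fun x => (H x : AddCircle (1 : ℝ))) 1 := fun x => by
    simp only [hp, AddCircle.coe_add_period]
  let g : AddCircle (1 : ℝ) → AddCircle (1 : ℝ) := hper.lift
  have hg : ∀ x : ℝ, g x = H x := fun x => rfl
  have hbij : Function.Bijective g := by
    constructor
    · intro x y
      induction x using QuotientAddGroup.induction_on with | H x => ?_
      induction y using QuotientAddGroup.induction_on with | H y => ?_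
      intro hxy
      rw [hg, hg] at hxy
      obtain ⟨n, hn⟩ := coe_eq_coe_iff_int.1 hxy
      rw [← map_add_intCast hp] at hn
      exact coe_eq_coe_iff_int.2 ⟨n, hm.injective hn⟩
    · intro y
      induction y using QuotientAddGroup.induction_on with | H y => ?_
      obtain ⟨x, rfl⟩ := hsurj y
      exact ⟨x, hg x⟩
  exact ⟨Equiv.ofBijective g hbij, ⟨H, hH, hg⟩, hg⟩

lemma pow_apply_coe {f : Equiv.Perm (AddCircle (1 : ℝ))} {F : ℝ → ℝ}
    (hf : ∀ x : ℝ, f ↑x = ↑(F x)) (n : ℕ) (x : ℝ) : (f ^ n) ↑x = ↑(F^[n] x) := by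
  induction n with
  | zero => rfl
  | succ n ih => rw [pow_succ', Equiv.Perm.mul_apply, ih, hf, Function.iterate_succ_apply']

lemma iterate_map_add_one {F : ℝ → ℝ} (h : ∀ x, F (x + 1) = F x + 1) (n : ℕ) (x : ℝ) :
    F^[n] (x + 1) = F^[n] x + 1 := by
  induction n generalizing x with
  | zero => rfl
  | succ n ih => rw [Function.iterate_succ_apply, h, ih, Function.iterate_succ_apply]

lemma addRight_pow_coe (t : ℝ) (n : ℕ) :
    (Equiv.addRight (t : AddCircle (1 : ℝ))) ^ n =
      Equiv.addRight ((n * t : ℝ) : AddCircle (1 : ℝ)) := by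
  induction n with
  | zero => ext x; simp
  | succ n ih =>
    rw [pow_succ', ih]
    ext x
    simp only [Equiv.Perm.mul_apply, Equiv.coe_addRight]
    push_cast
    rw [add_assoc, ← AddCircle.coe_add]
    congr 2; ring

/-! ### Conjugation to a rotation -/

/-- Every orientation-preserving piecewise affine homeomorphism of `S¹ = ℝ/ℤ` of finite
order `q ≥ 2` has rotation number `p/q` with `0 < p < q`, `gcd(p, q) = 1`, and is
conjugate within `PL⁺(S¹)` to the rotation `x ↦ x + p/q (mod 1)`. -/
theorem finite_order_pl_conj_to_rotation (q : ℕ) (hq : 2 ≤ q)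
    (f : Equiv.Perm (AddCircle (1 : ℝ))) (hf : InPL f) (ho : orderOf f = q) :
    ∃ p : ℕ, 0 < p ∧ p < q ∧ Nat.gcd p q = 1 ∧
      HasRotNum 1 f (((p : ℝ) / (q : ℝ) : ℝ) : AddCircle (1 : ℝ)) ∧
      ∃ h : Equiv.Perm (AddCircle (1 : ℝ)), InPL h ∧
        h * f * h⁻¹ = Equiv.addRight ((((p : ℝ) / (q : ℝ) : ℝ)) : AddCircle (1 : ℝ)) := by
  obtain ⟨F, hF, hfF⟩ := hf
  have hq0 : 0 < q := by omega
  have hqR : (0 : ℝ) < q := by exact_mod_cast hq0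
  have hm := hF.1
  have hp := hF.2.1
  have hloc := hF.locPL
  let g : CircleDeg1Lift := ⟨⟨F, hm.monotone⟩, hp⟩
  have hgpow : ∀ (n : ℕ) (x : ℝ), (g ^ n) x = F^[n] x := fun n x => by
    rw [CircleDeg1Lift.coe_pow]; rfl
  have hfq : f ^ q = 1 := ho ▸ pow_orderOf_eq_one f
  have hint : ∀ x, ∃ n : ℤ, F^[q] x = x + n := fun x => by
    have := pow_apply_coe hfF q x
    rw [hfq, Equiv.Perm.one_apply] at this
    exact coe_eq_coe_iff_int.1 this.symm
  obtain ⟨P, hP0⟩ := hint 0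
  have hP : ∀ x, F^[q] x = x + P := by
    intro x
    obtain ⟨n, hn⟩ := hint x
    -- Both integers are the translation number of `g ^ q`.
    have e1 := (g ^ q).translationNumber_of_eq_add_int ((hgpow q 0).trans hP0)
    have e2 := (g ^ q).translationNumber_of_eq_add_int ((hgpow q x).trans hn)
    rw [hn, ← e2, e1]
  have htau : g.translationNumber = P / q :=
    CircleDeg1Lift.translationNumber_of_map_pow_eq_add_int g ((hgpow q 0).trans hP0) hq0
  let p : ℕ := (P % q).toNat
  have hqZ : (q : ℤ) ≠ 0 := by exact_mod_cast hq0.ne'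
  have hpZ : (p : ℤ) = P % q := Int.toNat_of_nonneg (Int.emod_nonneg _ hqZ)
  have hplt : p < q := by
    have := Int.emod_lt_of_pos P (by exact_mod_cast hq0 : (0 : ℤ) < q)
    omega
  have hcoe : ((P / q : ℝ) : AddCircle (1 : ℝ)) = ((p / q : ℝ) : AddCircle (1 : ℝ)) := by
    refine coe_eq_coe_iff_int.2 ⟨P / q, ?_⟩
    have h1 : (P : ℝ) = p + q * ((P / q : ℤ) : ℝ) := by
      have : P = (p : ℤ) + q * (P / q) := by rw [hpZ, Int.emod_add_mul_ediv]
      exact_mod_cast this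
    field_simp
    linarith
  -- The average of the iterates; the semiconjugacy `hHF` holds since `F^[q] x = x + P`.
  let H : ℝ → ℝ := fun x => (q : ℝ)⁻¹ * ∑ i ∈ Finset.range q, F^[i] x
  have hH : IsPLLift 1 1 H := by
    refine LocPL.isPLLift ((LocPL.sum (fun n => hloc.iterate hm.monotone n) q).const_mul _) ?_ ?_
    · intro x y hxy
      refine mul_lt_mul_of_pos_left ?_ (inv_pos.2 hqR)
      exact Finset.sum_lt_sum_of_nonempty ⟨0, by simpa using hq0⟩ fun i _ => hm.iterate i hxy
    · intro x
      simp only [H, iterate_map_add_one hp, Finset.sum_add_distrib, Finset.sum_const,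
        Finset.card_range, nsmul_eq_mul, mul_one]
      field_simp
  have hHF : ∀ x, H (F x) = H x + P / q := by
    intro x
    have h1 := Finset.sum_range_succ (fun i => F^[i] x) q
    have h2 := Finset.sum_range_succ' (fun i => F^[i] x) q
    simp only [Function.iterate_succ_apply, Function.iterate_zero, id, hP x] at h1 h2
    have h3 : ∑ i ∈ Finset.range q, F^[i] (F x) = (∑ i ∈ Finset.range q, F^[i] x) + P := by
      linarith
    simp only [H, h3]
    field_simp
  obtain ⟨h, hhPL, hhH⟩ := hH.exists_perm
  have hconj : h * f * h⁻¹ = Equiv.addRight ((p / q : ℝ) : AddCircle (1 : ℝ)) := by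
    rw [mul_inv_eq_iff_eq_mul]
    ext x
    induction x using QuotientAddGroup.induction_on with | H x => ?_
    simp only [Equiv.Perm.mul_apply, Equiv.coe_addRight]
    rw [hfF, hhH, hhH, hHF, AddCircle.coe_add, hcoe]
  have hgcd : Nat.gcd p q = 1 := by
    set d := Nat.gcd p q with hd
    have hd0 : 0 < d := Nat.gcd_pos_of_pos_right _ hq0
    obtain ⟨k, hk⟩ : d ∣ q := Nat.gcd_dvd_right p q
    obtain ⟨r, hr⟩ : d ∣ p := Nat.gcd_dvd_left p q
    have hk0 : 0 < k := Nat.pos_of_ne_zero fun e => by simp [e] at hk; omega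
    have hpow : f ^ k = 1 := by
      have e : (h * f * h⁻¹) ^ k = 1 := by
        rw [hconj, addRight_pow_coe]
        have : (k * (p / q) : ℝ) = 0 + (r : ℤ) := by
          rw [hk, hr]
          push_cast
          field_simp
          ring
        rw [coe_eq_coe_iff_int.2 ⟨_, this⟩]
        ext x; simp
      rw [conj_pow] at e
      simpa using e
    have hdvd : q ∣ k := ho ▸ orderOf_dvd_of_pow_eq_one hpow
    have hle := Nat.le_of_dvd hk0 hdvd
    nlinarith
  refine ⟨p, ?_, hplt, hgcd, ⟨F, hm.monotone, hp, hfF, P / q, ?_, hcoe⟩, h, hhPL, hconj⟩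
  · refine Nat.pos_of_ne_zero fun e => ?_
    rw [e, Nat.gcd_zero_left] at hgcd
    omega
  · rw [← htau]
    refine g.tendsto_translation_number₀.congr fun n => ?_
    rw [hgpow, one_mul]
end
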